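/- arXiv:2601.08421 — 10 statements merged into one kernel-verified Lean document; each statement's English description precedes it below -/
import Mathlib

section
/- Let a, b > 0 and let σ(z) = 1/(1+e^{−z}) be the sigmoid function. Then for all real z, w with |z| ≤ a and |w| ≤ b, one has |σ(z) − σ(w)| ≥ |z − w| / (5.09 · max(|b − a|, 1) · e^{min(a,b)}). -/
/-!
Say `a ≤ b`, the other case being symmetric. On `[-a, a]` the derivative of `σ` is at least
`e^{-a} / 4`, so `σ` grows at that rate there (`sigmoid_sub_ge_of_abs_le`). Beyond `a`, an increment
of length `t ≤ M = max (b - a) 1` still has average slope at least `e^{-a} / (5.09 M)`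
(`sigmoid_add_sub_ge`); after clearing denominators this amounts to
`2 t (1 + e^{-t}) ≤ 5.09 M (1 - e^{-t})`, a consequence of `1 + t + t² / 2 ≤ e^t`.
An interval from `z ∈ [-a, a]` to `w ∈ (a, b]` is cut at `a` and the two increments are added;
`w < -a` is reduced to this by `σ(-x) = 1 - σ(x)`.
-/

/-- The sigmoid function σ(z) = 1/(1+e^{-z}). -/
noncomputable def sigmoid (z : ℝ) : ℝ := 1 / (1 + Real.exp (-z))

theorem sigmoid_neg_eq (x : ℝ) : sigmoid (-x) = 1 - sigmoid x := by
  unfold sigmoid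
  have h := Real.exp_pos x
  rw [neg_neg, Real.exp_neg]
  field_simp
  ring

theorem hasDerivAt_sigmoid' (x : ℝ) :
    HasDerivAt sigmoid (Real.exp (-x) / (1 + Real.exp (-x)) ^ 2) x := by
  have h0 : (1 + Real.exp (-x)) ≠ 0 := by positivity
  have h1 : HasDerivAt (fun y : ℝ => 1 + Real.exp (-y)) (-Real.exp (-x)) x := by
    simpa using ((hasDerivAt_neg x).exp).const_add 1
  have h2 := h1.fun_inv h0
  rw [neg_neg] at h2
  have h3 : sigmoid = fun y : ℝ => (1 + Real.exp (-y))⁻¹ := by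
    funext y
    simp [sigmoid]
  rw [h3]
  exact h2

theorem exp_neg_div_four_le_deriv {a x : ℝ} (hx : |x| ≤ a) :
    Real.exp (-a) / 4 ≤ Real.exp (-x) / (1 + Real.exp (-x)) ^ 2 := by
  obtain ⟨h1, h2⟩ := abs_le.mp hx
  have hp := Real.exp_pos (-x)
  have hq := Real.exp_pos (-a)
  have e1 : Real.exp (-a) ≤ Real.exp (-x) := Real.exp_le_exp.mpr (by linarith)
  have e2 : Real.exp (-a) ≤ 1 := Real.exp_le_one_iff.mpr (by linarith)
  have e3 : Real.exp (-a) * Real.exp (-x) ≤ 1 := by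
    rw [← Real.exp_add]
    exact Real.exp_le_one_iff.mpr (by linarith)
  rw [div_le_div_iff₀ (by norm_num) (by positivity)]
  nlinarith [mul_le_mul_of_nonneg_right e2 hp.le, mul_le_mul_of_nonneg_right e3 hp.le]

theorem sigmoid_sub_ge_of_abs_le {a x y : ℝ} (hx : |x| ≤ a) (hy : |y| ≤ a) (hxy : x ≤ y) :
    Real.exp (-a) / 4 * (y - x) ≤ sigmoid y - sigmoid x := by
  have hd : Differentiable ℝ sigmoid := fun u => (hasDerivAt_sigmoid' u).differentiableAt
  refine (convex_Icc (-a) a).mul_sub_le_image_sub_of_le_deriv hd.continuous.continuousOn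
    hd.differentiableOn (fun u hu => ?_) x (abs_le.mp hx) y (abs_le.mp hy) hxy
  rw [(hasDerivAt_sigmoid' u).deriv]
  have hu2 : u ∈ Set.Icc (-a) a := interior_subset hu
  exact exp_neg_div_four_le_deriv (abs_le.mpr hu2)

theorem two_mul_mul_one_add_exp_neg_le {t M : ℝ} (ht : 0 ≤ t) (htM : t ≤ M) (hM : 1 ≤ M) :
    2 * t * (1 + Real.exp (-t)) ≤ 5.09 * M * (1 - Real.exp (-t)) := by
  have hq := Real.quadratic_le_exp_of_nonneg ht
  have hu := Real.exp_pos (-t)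
  have hmul : Real.exp (-t) * (1 + t + t ^ 2 / 2) ≤ 1 := by
    calc Real.exp (-t) * (1 + t + t ^ 2 / 2) ≤ Real.exp (-t) * Real.exp t := by gcongr
      _ = 1 := by rw [← Real.exp_add]; simp
  set u := Real.exp (-t)
  have hu1 : u ≤ 1 := Real.exp_le_one_iff.mpr (by linarith)
  rcases le_total t 1 with h | h
  · -- `M` is replaced by `1`, and `u` by its upper bound `1 / (1 + t + t² / 2)`.
    suffices 2 * t * (1 + u) ≤ 5.09 * (1 - u) by nlinarith
    have hc : 0 ≤ 0.545 * t + 0.2725 * t ^ 2 - 0.5 * t ^ 3 := by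
      nlinarith [mul_nonneg ht (sub_nonneg.mpr h), mul_nonneg (mul_nonneg ht ht) (sub_nonneg.mpr h)]
    have hD : 0 < 1 + t + t ^ 2 / 2 := by positivity
    have hu' : u ≤ 1 / (1 + t + t ^ 2 / 2) := by rwa [le_div_iff₀ hD]
    have hk : (5.09 + 2 * t) * (1 / (1 + t + t ^ 2 / 2)) ≤ 5.09 - 2 * t := by
      rw [mul_one_div, div_le_iff₀ hD]
      nlinarith
    nlinarith [mul_le_mul_of_nonneg_left hu' (by positivity : 0 ≤ 5.09 + 2 * t)]
  · -- Here `t` is replaced by `M`, and `u ≤ 2 / 5`.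
    have : u ≤ 0.4 := by nlinarith
    nlinarith [mul_le_mul_of_nonneg_right htM (by positivity : 0 ≤ 1 + u)]

theorem sigmoid_add_sub_ge {a t M : ℝ} (ha : 0 ≤ a) (ht : 0 ≤ t) (htM : t ≤ M) (hM : 1 ≤ M) :
    t / (5.09 * M * Real.exp a) ≤ sigmoid (a + t) - sigmoid a := by
  have hk := two_mul_mul_one_add_exp_neg_le ht htM hM
  have hp := Real.exp_pos (-a)
  have hu := Real.exp_pos (-t)
  have hp1 : Real.exp (-a) ≤ 1 := Real.exp_le_one_iff.mpr (by linarith)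
  have hpa : Real.exp (-a) * Real.exp a = 1 := by rw [← Real.exp_add]; simp
  have hea := Real.exp_pos a
  have hsub : sigmoid (a + t) - sigmoid a = Real.exp (-a) * (1 - Real.exp (-t)) /
      ((1 + Real.exp (-a)) * (1 + Real.exp (-a) * Real.exp (-t))) := by
    unfold sigmoid
    rw [neg_add, Real.exp_add]
    field_simp
    ring
  rw [hsub, div_le_div_iff₀ (by positivity) (by positivity)]
  have hprod : (1 + Real.exp (-a)) * (1 + Real.exp (-a) * Real.exp (-t))
      ≤ 2 * (1 + Real.exp (-t)) := by
    have : Real.exp (-a) * Real.exp (-t) ≤ Real.exp (-t) := mul_le_of_le_one_left hu.le hp1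
    exact mul_le_mul (by linarith) (by linarith) (by positivity) (by norm_num)
  calc _ ≤ t * (2 * (1 + Real.exp (-t))) := mul_le_mul_of_nonneg_left hprod ht
    _ ≤ 5.09 * M * (1 - Real.exp (-t)) := by linarith
    _ = (Real.exp (-a) * Real.exp a) * (5.09 * M * (1 - Real.exp (-t))) := by rw [hpa, one_mul]
    _ = _ := by ring

/-- The slope on `[-a, a]`, weakened to the constant that also serves outside that interval. -/
theorem sub_div_le_sigmoid_sub {a x y M : ℝ} (hM : 1 ≤ M) (hx : |x| ≤ a) (hy : |y| ≤ a)
    (hxy : x ≤ y) : (y - x) / (5.09 * M * Real.exp a) ≤ sigmoid y - sigmoid x := by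
  refine le_trans ?_ (sigmoid_sub_ge_of_abs_le hx hy hxy)
  have hea := Real.exp_pos a
  calc (y - x) / (5.09 * M * Real.exp a) ≤ (y - x) / (4 * Real.exp a) :=
        div_le_div_of_nonneg_left (by linarith) (by positivity)
          (mul_le_mul_of_nonneg_right (by linarith) hea.le)
    _ = Real.exp (-a) / 4 * (y - x) := by rw [Real.exp_neg]; field_simp

theorem sub_div_le_sigmoid_sub_of_lt {a z w M : ℝ} (hM : 1 ≤ M) (hz : |z| ≤ a) (haw : a < w)
    (hwM : w - a ≤ M) : (w - z) / (5.09 * M * Real.exp a) ≤ sigmoid w - sigmoid z := by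
  have ha : 0 ≤ a := (abs_nonneg z).trans hz
  have h1 := sub_div_le_sigmoid_sub hM hz (abs_of_nonneg ha).le (le_of_abs_le hz)
  have h2 := sigmoid_add_sub_ge ha (sub_nonneg.mpr haw.le) hwM hM
  rw [add_sub_cancel] at h2
  have h3 : (w - z) / (5.09 * M * Real.exp a) =
      (w - a) / (5.09 * M * Real.exp a) + (a - z) / (5.09 * M * Real.exp a) := by ring
  linarith

theorem abs_sub_div_le_abs_sigmoid_sub {a b z w M : ℝ} (hM : 1 ≤ M) (hbM : b - a ≤ M)
    (hz : |z| ≤ a) (hw : |w| ≤ b) :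
    |z - w| / (5.09 * M * Real.exp a) ≤ |sigmoid z - sigmoid w| := by
  obtain ⟨hw1, hw2⟩ := abs_le.mp hw
  obtain ⟨hz1, hz2⟩ := abs_le.mp hz
  rcases lt_or_ge a w with h | h
  · have := sub_div_le_sigmoid_sub_of_lt hM hz h (by linarith)
    rw [abs_sub_comm z, abs_sub_comm (sigmoid z), abs_of_nonneg (by linarith : 0 ≤ w - z)]
    exact this.trans (le_abs_self _)
  rcases lt_or_ge w (-a) with h' | h'
  · have := sub_div_le_sigmoid_sub_of_lt hM ((abs_neg z).trans_le hz)
      (by linarith : a < -w) (by linarith)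
    rw [sigmoid_neg_eq, sigmoid_neg_eq, sub_sub_sub_cancel_left, neg_sub_neg] at this
    rw [abs_of_nonneg (by linarith : 0 ≤ z - w)]
    exact this.trans (le_abs_self _)
  have hwa : |w| ≤ a := abs_le.mpr ⟨h', h⟩
  rcases le_total w z with hwz | hwz
  · rw [abs_of_nonneg (by linarith : 0 ≤ z - w)]
    exact (sub_div_le_sigmoid_sub hM hwa hz hwz).trans (le_abs_self _)
  · rw [abs_sub_comm z, abs_sub_comm (sigmoid z), abs_of_nonneg (by linarith : 0 ≤ w - z)]
    exact (sub_div_le_sigmoid_sub hM hz hwa hwz).trans (le_abs_self _)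

/-- Tight sigmoid differences: for |z| ≤ a, |w| ≤ b,
|σ(z) − σ(w)| ≥ |z − w| / (5.09 · max(|b − a|, 1) · e^{min(a,b)}). -/
theorem tight_sigmoid_differences (a b : ℝ) (ha : 0 < a) (hb : 0 < b)
    (z w : ℝ) (hz : |z| ≤ a) (hw : |w| ≤ b) :
    |z - w| / (5.09 * max |b - a| 1 * Real.exp (min a b)) ≤ |sigmoid z - sigmoid w| := by
  have hM : 1 ≤ max |b - a| 1 := le_max_right _ _
  have hd : |b - a| ≤ max |b - a| 1 := le_max_left _ _
  rcases le_total a b with h | h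
  · rw [min_eq_left h]
    exact abs_sub_div_le_abs_sigmoid_sub hM ((le_abs_self _).trans hd) hz hw
  · rw [min_eq_right h, abs_sub_comm z, abs_sub_comm (sigmoid z)]
    exact abs_sub_div_le_abs_sigmoid_sub hM
      (((le_abs_self _).trans_eq (abs_sub_comm a b)).trans hd) hw hz
end

section
/- For z, w ∈ (0,1), the Kullback–Leibler divergence between the Bernoulli distributions with parameters σ(z) and σ(w) satisfies KL(Bern(σ(z)) ‖ Bern(σ(w))) ≤ (1/8)·(z − w)², where σ(z) = 1/(1+e^{−z}) and KL(Bern(p) ‖ Bern(q)) = p·ln(p/q) + (1−p)·ln((1−p)/(1−q)). -/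
/-- KL divergence between Bernoulli distributions with parameters p and q. -/
noncomputable def klBern (p q : ℝ) : ℝ :=
  p * Real.log (p / q) + (1 - p) * Real.log ((1 - p) / (1 - q))

lemma sigmoid_eq_exp_div (t : ℝ) : sigmoid t = Real.exp t / (1 + Real.exp t) := by
  have := Real.exp_pos t
  rw [sigmoid, Real.exp_neg]
  field_simp
  ring

lemma one_sub_sigmoid (t : ℝ) : 1 - sigmoid t = 1 / (1 + Real.exp t) := by
  have := Real.exp_pos t
  rw [sigmoid_eq_exp_div]
  field_simp
  ring

lemma log_sigmoid (t : ℝ) : Real.log (sigmoid t) = t - Real.log (1 + Real.exp t) := by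
  have := Real.exp_pos t
  rw [sigmoid_eq_exp_div, Real.log_div (by positivity) (by positivity), Real.log_exp]

lemma log_one_sub_sigmoid (t : ℝ) : Real.log (1 - sigmoid t) = -Real.log (1 + Real.exp t) := by
  rw [one_sub_sigmoid, one_div, Real.log_inv]

/-- In the natural parameter, the Bernoulli divergence is the Bregman divergence of
`t ↦ log (1 + exp t)`. -/
lemma klBern_sigmoid_eq (z w : ℝ) :
    klBern (sigmoid z) (sigmoid w) =
      Real.log (1 + Real.exp w) - Real.log (1 + Real.exp z) - sigmoid z * (w - z) := by
  have h (t : ℝ) : sigmoid t ≠ 0 := by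
    have := Real.exp_pos t
    rw [sigmoid_eq_exp_div]
    positivity
  have h' (t : ℝ) : 1 - sigmoid t ≠ 0 := by
    have := Real.exp_pos t
    rw [one_sub_sigmoid]
    positivity
  rw [klBern, Real.log_div (h z) (h w), Real.log_div (h' z) (h' w)]
  simp only [log_sigmoid, log_one_sub_sigmoid]
  ring

lemma hasDerivAt_sigmoid (t : ℝ) : HasDerivAt sigmoid (sigmoid t * (1 - sigmoid t)) t := by
  have hpos := Real.exp_pos t
  have h := (Real.hasDerivAt_exp t).div ((Real.hasDerivAt_exp t).const_add 1) (by positivity)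
  rw [show sigmoid = Real.exp / fun x => 1 + Real.exp x from funext sigmoid_eq_exp_div]
  refine h.congr_deriv ?_
  simp only [Pi.div_apply]
  field_simp

lemma hasDerivAt_quadratic_sub_softplus (t : ℝ) :
    HasDerivAt (fun x : ℝ => x ^ 2 / 8 - Real.log (1 + Real.exp x)) (t / 4 - sigmoid t) t := by
  have hpos := Real.exp_pos t
  have h := (((hasDerivAt_id t).pow 2).div_const 8).sub
    (((Real.hasDerivAt_exp t).const_add 1).log (by positivity))
  refine h.congr_deriv ?_
  rw [sigmoid_eq_exp_div]
  simp
  ring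

/-- The derivative `t / 4 - sigmoid t` is monotone because `s * (1 - s) ≤ 1 / 4`. -/
lemma convexOn_quadratic_sub_softplus :
    ConvexOn ℝ Set.univ (fun x : ℝ => x ^ 2 / 8 - Real.log (1 + Real.exp x)) := by
  refine Monotone.convexOn_univ_of_deriv
    (fun t => (hasDerivAt_quadratic_sub_softplus t).differentiableAt) ?_
  rw [show deriv _ = _ from funext fun t => (hasDerivAt_quadratic_sub_softplus t).deriv]
  have h (t : ℝ) := ((hasDerivAt_id t).div_const 4).sub (hasDerivAt_sigmoid t)
  refine monotone_of_deriv_nonneg (fun t => (h t).differentiableAt) fun t => ?_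
  refine (h t).deriv.symm ▸ ?_
  nlinarith [sq_nonneg (sigmoid t - 1 / 2)]

/-- For z, w ∈ (0,1), KL(Bern(σ(z)) ‖ Bern(σ(w))) ≤ (1/8)·(z − w)². -/
theorem klBern_sigmoid_le (z w : ℝ) (hz : z ∈ Set.Ioo (0:ℝ) 1) (hw : w ∈ Set.Ioo (0:ℝ) 1) :
    klBern (sigmoid z) (sigmoid w) ≤ (1/8 : ℝ) * (z - w)^2 := by
  have hc := convexOn_quadratic_sub_softplus
  have hz' := hasDerivAt_quadratic_sub_softplus z
  have key : (z / 4 - sigmoid z) * (w - z) ≤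
      (w ^ 2 / 8 - Real.log (1 + Real.exp w)) - (z ^ 2 / 8 - Real.log (1 + Real.exp z)) := by
    rcases lt_trichotomy z w with h | h | h
    · have := hc.le_slope_of_hasDerivAt (Set.mem_univ z) (Set.mem_univ w) h hz'
      rwa [slope_def_field, le_div_iff₀ (sub_pos.2 h)] at this
    · simp [h]
    · have := hc.slope_le_of_hasDerivAt (Set.mem_univ w) (Set.mem_univ z) h hz'
      rw [slope_def_field, div_le_iff₀ (sub_pos.2 h)] at this
      linarith
  rw [klBern_sigmoid_eq]
  nlinarith [key]
end

section
/- Let X be a real-valued random variable with |X| ≤ a almost surely for some a > 0, and let X' be an independent copy of X (independent and identically distributed). Then E[|X − E[X]|] ≤ 4a · P(X ≠ X'). -/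
open MeasureTheory ProbabilityTheory

/-!
Let `ν` be the law of `X`. For `ν`-almost every `x`, averaging over `y` gives
`|x - ∫ y ∂ν| ≤ ∫ |x - y| ∂ν(y) ≤ 2a · ν {y | x ≠ y}`, since `|x - y|` vanishes at `y = x` and is at
most `2a` almost everywhere. Integrating over `x` turns the right-hand side into
`2a · (ν ⊗ ν) {(x, y) | x ≠ y}`, and `ν ⊗ ν` is the joint law of `(X, X')` by independence. This
yields the bound with the constant `2a`, hence also with `4a`.
-/

/-- The pointwise estimate: a point `x ∈ [-a, a]` is within `2a · ν {y | x ≠ y}` of the mean of a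
probability measure `ν` carried by `[-a, a]`. -/
lemma abs_sub_mean_le (ν : Measure ℝ) [IsProbabilityMeasure ν] (a : ℝ)
    (hν : ∀ᵐ y ∂ν, |y| ≤ a) (x : ℝ) (hx : |x| ≤ a) :
    |x - ∫ y, y ∂ν| ≤ 2 * a * ν.real {y | x ≠ y} := by
  have hint : Integrable (fun y : ℝ => y) ν :=
    Integrable.of_bound measurable_id.aestronglyMeasurable a hν
  have hS : MeasurableSet {y : ℝ | x ≠ y} :=
    (measurableSet_eq_fun measurable_const measurable_id).compl
  have h1 : x - ∫ y, y ∂ν = ∫ y, (x - y) ∂ν := by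
    rw [integral_sub (integrable_const x) hint]; simp
  have h2 : ∫ y, {y : ℝ | x ≠ y}.indicator (fun _ => 2 * a) y ∂ν
      = 2 * a * ν.real {y | x ≠ y} := by
    rw [integral_indicator_const _ hS, smul_eq_mul, mul_comm]
  rw [h1, ← h2, ← Real.norm_eq_abs]
  refine norm_integral_le_of_norm_le ((integrable_const (2 * a)).indicator hS) ?_
  filter_upwards [hν] with y hy
  by_cases hxy : x = y
  · simp [hxy]
  · rw [Set.indicator_of_mem (show y ∈ {y : ℝ | x ≠ y} from hxy), Real.norm_eq_abs]
    linarith [abs_sub x y]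

/-- If |X| ≤ a a.s. and X' is an independent copy of X, then
E[|X − E[X]|] ≤ 4a · P(X ≠ X'). -/
theorem mad_le_of_independent_copy {Ω : Type*} [MeasurableSpace Ω]
    (μ : Measure Ω) [IsProbabilityMeasure μ] (a : ℝ) (ha : 0 < a)
    (X X' : Ω → ℝ) (hXm : Measurable X) (hX'm : Measurable X')
    (hbd : ∀ᵐ ω ∂μ, |X ω| ≤ a)
    (hindep : IndepFun X X' μ)
    (hid : Measure.map X μ = Measure.map X' μ) :
    ∫ ω, |X ω - ∫ ω', X ω' ∂μ| ∂μ ≤ 4 * a * (μ {ω | X ω ≠ X' ω}).toReal := by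
  set ν := Measure.map X μ
  have : IsProbabilityMeasure ν := Measure.isProbabilityMeasure_map hXm.aemeasurable
  have hν : ∀ᵐ y ∂ν, |y| ≤ a :=
    (ae_map_iff hXm.aemeasurable (measurableSet_le measurable_id.abs measurable_const)).2 hbd
  have hmean : ∫ ω', X ω' ∂μ = ∫ y, y ∂ν :=
    (integral_map hXm.aemeasurable measurable_id.aestronglyMeasurable).symm
  have hlhs : ∫ ω, |X ω - ∫ ω', X ω' ∂μ| ∂μ = ∫ x, |x - ∫ y, y ∂ν| ∂ν := by
    rw [hmean]
    exact (integral_map (f := fun x : ℝ => |x - ∫ y, y ∂ν|) hXm.aemeasurable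
      (Continuous.aestronglyMeasurable (by fun_prop))).symm
  have hS : MeasurableSet {p : ℝ × ℝ | p.1 ≠ p.2} :=
    (measurableSet_eq_fun measurable_fst measurable_snd).compl
  have hjoint : Measure.map (fun ω => (X ω, X' ω)) μ = ν.prod ν := by
    rw [(indepFun_iff_map_prod_eq_prod_map_map hXm.aemeasurable hX'm.aemeasurable).1 hindep,
      ← hid]
  have hprob : μ {ω | X ω ≠ X' ω} = ∫⁻ x, ν {y | x ≠ y} ∂ν := by
    have h := Measure.map_apply (μ := μ) (hXm.prodMk hX'm) hS
    rw [hjoint, Measure.prod_apply hS] at h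
    exact h.symm
  have hreal : ∫ x, ν.real {y | x ≠ y} ∂ν = (μ {ω | X ω ≠ X' ω}).toReal := by
    rw [hprob]
    exact integral_toReal (measurable_measure_prodMk_left hS).aemeasurable
      (Filter.Eventually.of_forall fun x => measure_lt_top ν _)
  have hint : Integrable (fun x => ν.real {y | x ≠ y}) ν :=
    Integrable.of_bound
      (measurable_measure_prodMk_left hS).ennreal_toReal.aestronglyMeasurable 1
      (Filter.Eventually.of_forall fun x => by
        rw [Real.norm_eq_abs, abs_of_nonneg measureReal_nonneg]
        exact measureReal_le_one)
  calc ∫ ω, |X ω - ∫ ω', X ω' ∂μ| ∂μ = ∫ x, |x - ∫ y, y ∂ν| ∂ν := hlhs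
    _ ≤ ∫ x, 2 * a * ν.real {y | x ≠ y} ∂ν := by
      refine integral_mono_of_nonneg (Filter.Eventually.of_forall fun x => abs_nonneg _)
        (hint.const_mul _) ?_
      filter_upwards [hν] with x hx using abs_sub_mean_le ν a hν x hx
    _ = 2 * a * (μ {ω | X ω ≠ X' ω}).toReal := by rw [integral_const_mul, hreal]
    _ ≤ 4 * a * (μ {ω | X ω ≠ X' ω}).toReal := by gcongr; norm_num
end

section
/- Fix d ≥ 1 and let S = {u ∈ ℝ^d : Σᵢ uᵢ = 0}. For θ ∈ S with ‖θ‖_∞ ≤ τ, let π_θ = softmax(θ), i.e., π_θ(i) = e^{θᵢ}/Σⱼ e^{θⱼ}. Then for any fixed θ' ∈ S ∩ {‖·‖_∞ ≤ τ}, the map θ ↦ KL(π_{θ'} ‖ π_θ) is convex on the convex set S ∩ {θ : ‖θ‖_∞ ≤ τ}, and for all θ, θ' in this set, (e^{−4τ}/(2d))·‖θ − θ'‖₂² ≤ KL(π_{θ'} ‖ π_θ) ≤ (e^{4τ}/(2d))·‖θ − θ'‖₂². -/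
/-!
Write `L θ = log ∑ exp θᵢ` for the log-partition function. Then `KL(π_{θ'} ‖ π_θ)` is the Bregman
divergence `L θ - L θ' - ⟪π_{θ'}, θ - θ'⟫` of `L` (`klVec_softmax`), because `∇L θ' = π_{θ'}`.
Along the segment `θ' + t v`, `v = θ - θ'`, the second derivative of `L` is the variance of `v`
under the softmax distribution. On the box `‖·‖_∞ ≤ τ` every softmax weight lies between
`exp (-2τ) / d` and `exp (2τ) / d`; as `∑ vᵢ = 0`, centring `v` only increases its sum of squares,
so the variance lies between `exp (-2τ) / d * ‖v‖²` and `exp (2τ) / d * ‖v‖²`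
(`softmax_variance_bounds`). Integrating twice gives the two-sided estimate, which holds even with
`2τ` in place of `4τ`. Convexity follows from the lower estimate: nonnegativity of the Bregman
divergence says that `L` lies above its tangent planes.
-/

open Finset

/-- The softmax distribution on {1,…,d} induced by logits θ. -/
noncomputable def softmax {d : ℕ} (θ : Fin d → ℝ) (i : Fin d) : ℝ :=
  Real.exp (θ i) / ∑ j, Real.exp (θ j)

/-- KL divergence between two probability vectors on Fin d. -/
noncomputable def klVec {d : ℕ} (p q : Fin d → ℝ) : ℝ :=
  ∑ i, p i * Real.log (p i / q i)

/-- Second-order Taylor lower bound on `[0, 1]`. -/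
lemma taylor_lower {f f' f'' : ℝ → ℝ} (hf : ∀ t, HasDerivAt f (f' t) t)
    (hf' : ∀ t, HasDerivAt f' (f'' t) t) {c : ℝ} (hc : ∀ t ∈ Set.Icc (0 : ℝ) 1, c ≤ f'' t) :
    c / 2 ≤ f 1 - f 0 - f' 0 := by
  have hg : ∀ t, HasDerivAt (fun t => f' t - c * t) (f'' t - c) t := fun t => by
    simpa using (hf' t).fun_sub ((hasDerivAt_id t).const_mul c)
  have hgm : MonotoneOn (fun t => f' t - c * t) (Set.Icc 0 1) := by
    refine monotoneOn_of_deriv_nonneg (convex_Icc 0 1)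
      (fun t _ => (hg t).continuousAt.continuousWithinAt)
      (fun t _ => (hg t).differentiableAt.differentiableWithinAt) fun t ht => ?_
    rw [(hg t).deriv]
    linarith [hc t (interior_subset ht)]
  have hh : ∀ t, HasDerivAt (fun t => f t - f' 0 * t - c / 2 * t ^ 2) (f' t - f' 0 - c * t) t :=
    fun t => by
      have h := ((hf t).sub ((hasDerivAt_id t).const_mul (f' 0))).sub
        ((hasDerivAt_pow 2 t).const_mul (c / 2))
      refine h.congr_deriv ?_
      norm_num
      ring
  have hhm : MonotoneOn (fun t => f t - f' 0 * t - c / 2 * t ^ 2) (Set.Icc 0 1) := by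
    refine monotoneOn_of_deriv_nonneg (convex_Icc 0 1)
      (fun t _ => (hh t).continuousAt.continuousWithinAt)
      (fun t _ => (hh t).differentiableAt.differentiableWithinAt) fun t ht => ?_
    rw [(hh t).deriv]
    have ht' := interior_subset ht
    have := hgm (Set.left_mem_Icc.2 zero_le_one) ht' ht'.1
    simp only [mul_zero, sub_zero] at this
    linarith
  have := hhm (Set.left_mem_Icc.2 zero_le_one) (Set.right_mem_Icc.2 zero_le_one) zero_le_one
  norm_num at this
  linarith

lemma sum_exp_pos {d : ℕ} (hd : 1 ≤ d) (θ : Fin d → ℝ) : 0 < ∑ j, Real.exp (θ j) := by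
  have : Nonempty (Fin d) := ⟨⟨0, hd⟩⟩
  exact Finset.sum_pos (fun i _ => Real.exp_pos _) Finset.univ_nonempty

lemma sum_softmax {d : ℕ} (hd : 1 ≤ d) (θ : Fin d → ℝ) : ∑ i, softmax θ i = 1 := by
  unfold softmax
  rw [← Finset.sum_div, div_self (sum_exp_pos hd θ).ne']

lemma softmax_bounds {d : ℕ} (hd : 1 ≤ d) {τ : ℝ} {θ : Fin d → ℝ} (hθ : ∀ i, |θ i| ≤ τ)
    (i : Fin d) :
    Real.exp (-2 * τ) / d ≤ softmax θ i ∧ softmax θ i ≤ Real.exp (2 * τ) / d := by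
  have hd' : (0 : ℝ) < d := by exact_mod_cast hd
  have hZ := sum_exp_pos hd θ
  have hlo : ∀ j, Real.exp (-τ) ≤ Real.exp (θ j) := fun j =>
    Real.exp_le_exp.2 (abs_le.1 (hθ j)).1
  have hhi : ∀ j, Real.exp (θ j) ≤ Real.exp τ := fun j =>
    Real.exp_le_exp.2 (abs_le.1 (hθ j)).2
  have hZlo : d * Real.exp (-τ) ≤ ∑ j, Real.exp (θ j) := by
    simpa using Finset.sum_le_sum fun j (_ : j ∈ Finset.univ) => hlo j
  have hZhi : ∑ j, Real.exp (θ j) ≤ d * Real.exp τ := by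
    simpa using Finset.sum_le_sum fun j (_ : j ∈ Finset.univ) => hhi j
  have e1 : Real.exp (-2 * τ) * Real.exp τ = Real.exp (-τ) := by
    rw [← Real.exp_add]; ring_nf
  have e2 : Real.exp (2 * τ) * Real.exp (-τ) = Real.exp τ := by
    rw [← Real.exp_add]; ring_nf
  unfold softmax
  constructor
  · rw [div_le_div_iff₀ hd' hZ]
    calc Real.exp (-2 * τ) * ∑ j, Real.exp (θ j)
        ≤ Real.exp (-2 * τ) * (d * Real.exp τ) := by gcongr
      _ = Real.exp (-τ) * d := by rw [← e1]; ring
      _ ≤ _ := by exact mul_le_mul_of_nonneg_right (hlo i) hd'.le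
  · rw [div_le_div_iff₀ hZ hd']
    calc Real.exp (θ i) * d ≤ Real.exp τ * d := by exact mul_le_mul_of_nonneg_right (hhi i) hd'.le
      _ = Real.exp (2 * τ) * (d * Real.exp (-τ)) := by rw [← e2]; ring
      _ ≤ _ := by gcongr

/-- The variance of a centred vector under a softmax distribution is comparable to its squared
Euclidean norm. -/
lemma softmax_variance_bounds {d : ℕ} (hd : 1 ≤ d) {τ : ℝ} {θ : Fin d → ℝ}
    (hθ : ∀ i, |θ i| ≤ τ) {v : Fin d → ℝ} (hv : ∑ i, v i = 0) :
    Real.exp (-2 * τ) / d * ∑ i, v i ^ 2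
        ≤ ∑ i, softmax θ i * v i ^ 2 - (∑ i, softmax θ i * v i) ^ 2 ∧
      ∑ i, softmax θ i * v i ^ 2 - (∑ i, softmax θ i * v i) ^ 2
        ≤ Real.exp (2 * τ) / d * ∑ i, v i ^ 2 := by
  constructor
  · set m := ∑ i, softmax θ i * v i with hm
    have h1 : ∑ i, softmax θ i * (v i - m) ^ 2 = ∑ i, softmax θ i * v i ^ 2 - m ^ 2 := by
      have : ∀ i, softmax θ i * (v i - m) ^ 2
          = softmax θ i * v i ^ 2 - 2 * m * (softmax θ i * v i) + m ^ 2 * softmax θ i :=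
        fun i => by ring
      simp only [this, Finset.sum_add_distrib, Finset.sum_sub_distrib, ← Finset.mul_sum,
        sum_softmax hd, ← hm]
      ring
    have h2 : ∑ i, (v i - m) ^ 2 = ∑ i, v i ^ 2 + d * m ^ 2 := by
      have : ∀ i, (v i - m) ^ 2 = v i ^ 2 - 2 * m * v i + m ^ 2 := fun i => by ring
      simp only [this, Finset.sum_add_distrib, Finset.sum_sub_distrib, ← Finset.mul_sum, hv]
      simp
    rw [← h1]
    calc Real.exp (-2 * τ) / d * ∑ i, v i ^ 2
        ≤ Real.exp (-2 * τ) / d * ∑ i, (v i - m) ^ 2 := by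
          refine mul_le_mul_of_nonneg_left ?_ (by positivity)
          rw [h2]
          exact le_add_of_nonneg_right (by positivity)
      _ ≤ _ := by
          rw [Finset.mul_sum]
          gcongr with i
          exact (softmax_bounds hd hθ i).1
  · refine (sub_le_self _ (sq_nonneg _)).trans ?_
    rw [Finset.mul_sum]
    gcongr with i
    exact (softmax_bounds hd hθ i).2

/-- The KL divergence of softmax distributions is the Bregman divergence of log-sum-exp. -/
lemma klVec_softmax {d : ℕ} (hd : 1 ≤ d) (θ' θ : Fin d → ℝ) :
    klVec (softmax θ') (softmax θ) = Real.log (∑ j, Real.exp (θ j))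
      - Real.log (∑ j, Real.exp (θ' j)) - ∑ i, softmax θ' i * (θ i - θ' i) := by
  have hlog : ∀ i, Real.log (softmax θ' i / softmax θ i)
      = (Real.log (∑ j, Real.exp (θ j)) - Real.log (∑ j, Real.exp (θ' j)))
        - (θ i - θ' i) := fun i => by
    have h := (sum_exp_pos hd θ).ne'
    have h' := (sum_exp_pos hd θ').ne'
    unfold softmax
    rw [Real.log_div (by positivity) (by positivity),
      Real.log_div (Real.exp_ne_zero _) h', Real.log_div (Real.exp_ne_zero _) h,
      Real.log_exp, Real.log_exp]
    ring
  unfold klVec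
  simp only [hlog, mul_sub (softmax θ' _) (_ - _) (_ - _), Finset.sum_sub_distrib,
    ← Finset.sum_mul, sum_softmax hd, one_mul]

lemma hasDerivAt_logSumExp {d : ℕ} (hd : 1 ≤ d) (θ v : Fin d → ℝ) (t : ℝ) :
    HasDerivAt (fun t : ℝ => Real.log (∑ j, Real.exp (θ j + t * v j)))
      (∑ i, softmax (fun j => θ j + t * v j) i * v i) t := by
  have he : ∀ j, HasDerivAt (fun t : ℝ => Real.exp (θ j + t * v j))
      (Real.exp (θ j + t * v j) * v j) t := fun j => by
    simpa using (((hasDerivAt_id t).mul_const (v j)).const_add (θ j)).exp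
  have hZ := HasDerivAt.fun_sum fun j (_ : j ∈ Finset.univ) => he j
  refine (hZ.log (sum_exp_pos hd _).ne').congr_deriv ?_
  unfold softmax
  rw [Finset.sum_div]
  exact Finset.sum_congr rfl fun i _ => by ring

/-- The derivative of the softmax mean of `v` in direction `v` is the softmax variance of `v`. -/
lemma hasDerivAt_softmax_mean {d : ℕ} (hd : 1 ≤ d) (θ v : Fin d → ℝ) (t : ℝ) :
    HasDerivAt (fun t : ℝ => ∑ i, softmax (fun j => θ j + t * v j) i * v i)
      (∑ i, softmax (fun j => θ j + t * v j) i * v i ^ 2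
        - (∑ i, softmax (fun j => θ j + t * v j) i * v i) ^ 2) t := by
  have he : ∀ j, HasDerivAt (fun t : ℝ => Real.exp (θ j + t * v j))
      (Real.exp (θ j + t * v j) * v j) t := fun j => by
    simpa using (((hasDerivAt_id t).mul_const (v j)).const_add (θ j)).exp
  have hZ := HasDerivAt.fun_sum fun j (_ : j ∈ Finset.univ) => he j
  have hM := HasDerivAt.fun_sum fun j (_ : j ∈ Finset.univ) => (he j).mul_const (v j)
  have hZ0 := (sum_exp_pos hd fun j => θ j + t * v j).ne'
  have key : ∀ (s : ℝ) (w : Fin d → ℝ), ∑ i, softmax (fun j => θ j + s * v j) i * w i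
      = (∑ i, Real.exp (θ i + s * v i) * w i) / ∑ j, Real.exp (θ j + s * v j) := fun s w => by
    unfold softmax
    rw [Finset.sum_div]
    exact Finset.sum_congr rfl fun i _ => by ring
  have key2 := key t fun i => v i ^ 2
  simp only [key2, fun s => key s v]
  refine (hM.fun_div hZ hZ0).congr_deriv ?_
  simp only [mul_assoc, ← pow_two]
  field_simp

/-- The two-sided estimate with the sharper exponent `2τ`. -/
lemma klVec_softmax_bounds {d : ℕ} (hd : 1 ≤ d) {τ : ℝ} {θ θ' : Fin d → ℝ}
    (h0 : ∑ i, θ i = 0) (hθ : ∀ i, |θ i| ≤ τ) (h0' : ∑ i, θ' i = 0) (hθ' : ∀ i, |θ' i| ≤ τ) :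
    Real.exp (-2 * τ) / d * (∑ i, (θ i - θ' i) ^ 2) / 2 ≤ klVec (softmax θ') (softmax θ) ∧
      klVec (softmax θ') (softmax θ)
        ≤ Real.exp (2 * τ) / d * (∑ i, (θ i - θ' i) ^ 2) / 2 := by
  have hv : ∑ i, (θ i - θ' i) = 0 := by rw [Finset.sum_sub_distrib, h0, h0', sub_zero]
  have hbox : ∀ t ∈ Set.Icc (0 : ℝ) 1, ∀ i, |θ' i + t * (θ i - θ' i)| ≤ τ := by
    intro t ht i
    have h1 := abs_le.1 (hθ i)
    have h2 := abs_le.1 (hθ' i)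
    rw [abs_le]
    constructor <;> nlinarith [ht.1, ht.2]
  have hf := hasDerivAt_logSumExp hd θ' fun i => θ i - θ' i
  have hf' := hasDerivAt_softmax_mean hd θ' fun i => θ i - θ' i
  have lo := taylor_lower hf hf' fun t ht => (softmax_variance_bounds hd (hbox t ht) hv).1
  have hi := taylor_lower (fun t => (hf t).fun_neg) (fun t => (hf' t).fun_neg) fun t ht =>
    neg_le_neg (softmax_variance_bounds hd (hbox t ht) hv).2
  simp only [zero_mul, add_zero, one_mul, add_sub_cancel] at lo hi
  rw [klVec_softmax hd]
  constructor <;> linarith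

/-- Positive local curvature of KL for softmax distributions on the set
S ∩ {‖·‖_∞ ≤ τ}, where S = {θ : Σᵢ θᵢ = 0}: the map θ ↦ KL(π_{θ'} ‖ π_θ) is convex
on this set, and (e^{−4τ}/(2d))·‖θ−θ'‖₂² ≤ KL(π_{θ'} ‖ π_θ) ≤ (e^{4τ}/(2d))·‖θ−θ'‖₂². -/
theorem kl_softmax_curvature (d : ℕ) (hd : 1 ≤ d) (τ : ℝ) (hτ : 0 < τ) :
    (∀ θ' : Fin d → ℝ, (∑ i, θ' i = 0) → (∀ i, |θ' i| ≤ τ) →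
      ConvexOn ℝ {θ : Fin d → ℝ | (∑ i, θ i = 0) ∧ ∀ i, |θ i| ≤ τ}
        (fun θ => klVec (softmax θ') (softmax θ))) ∧
    (∀ θ θ' : Fin d → ℝ,
      (∑ i, θ i = 0) → (∀ i, |θ i| ≤ τ) →
      (∑ i, θ' i = 0) → (∀ i, |θ' i| ≤ τ) →
      Real.exp (-4 * τ) / (2 * d) * (∑ i, (θ i - θ' i)^2)
          ≤ klVec (softmax θ') (softmax θ) ∧
      klVec (softmax θ') (softmax θ)
          ≤ Real.exp (4 * τ) / (2 * d) * (∑ i, (θ i - θ' i)^2)) := by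
  constructor
  · intro θ' _ _
    have hconv : Convex ℝ {θ : Fin d → ℝ | (∑ i, θ i = 0) ∧ ∀ i, |θ i| ≤ τ} := by
      rintro x ⟨hx0, hx⟩ y ⟨hy0, hy⟩ a b ha hb hab
      refine ⟨?_, fun i => ?_⟩
      · simp [Finset.sum_add_distrib, ← Finset.mul_sum, hx0, hy0]
      · have h1 := abs_le.1 (hx i)
        have h2 := abs_le.1 (hy i)
        obtain rfl : b = 1 - a := by linarith
        simp only [Pi.add_apply, Pi.smul_apply, smul_eq_mul]
        rw [abs_le]
        constructor <;> nlinarith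
    refine ⟨hconv, fun x hx y hy a b ha hb hab => ?_⟩
    have hz := hconv hx hy ha hb hab
    set z := a • x + b • y with hzdef
    have hnn : ∀ w : Fin d → ℝ, (∑ i, w i = 0) → (∀ i, |w i| ≤ τ) →
        0 ≤ klVec (softmax z) (softmax w) := fun w hw0 hw =>
      le_trans (by positivity) (klVec_softmax_bounds hd hw0 hw hz.1 hz.2).1
    -- the tangent plane of log-sum-exp at `z` lies below its values at `x` and `y`
    have hX := mul_nonneg ha (hnn x hx.1 hx.2)
    have hY := mul_nonneg hb (hnn y hy.1 hy.2)
    -- an affine term of the Bregman divergence commutes with the convex combination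
    have haff : ∀ p c : Fin d → ℝ, ∑ i, p i * (z i - c i)
        = a * ∑ i, p i * (x i - c i) + b * ∑ i, p i * (y i - c i) := fun p c => by
      simp only [Finset.mul_sum, ← Finset.sum_add_distrib]
      refine Finset.sum_congr rfl fun i _ => ?_
      obtain rfl : b = 1 - a := by linarith
      simp only [hzdef, Pi.add_apply, Pi.smul_apply, smul_eq_mul]
      ring
    have hzz := haff (softmax z) z
    have hzθ := haff (softmax θ') θ'
    simp only [sub_self, mul_zero, Finset.sum_const_zero] at hzz
    simp only [klVec_softmax hd, smul_eq_mul] at hX hY ⊢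
    obtain rfl : b = 1 - a := by linarith
    linarith
  · intro θ θ' h0 hθ h0' hθ'
    obtain ⟨lo, hi⟩ := klVec_softmax_bounds hd h0 hθ h0' hθ'
    have hd' : (0 : ℝ) < d := by exact_mod_cast hd
    constructor
    · refine le_trans ?_ lo
      calc Real.exp (-4 * τ) / (2 * d) * ∑ i, (θ i - θ' i) ^ 2
          ≤ Real.exp (-2 * τ) / (2 * d) * ∑ i, (θ i - θ' i) ^ 2 := by
            gcongr ?_ / _ * _
            exact Real.exp_le_exp.2 (by linarith)
        _ = _ := by field_simp
    · refine hi.trans ?_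
      calc Real.exp (2 * τ) / d * (∑ i, (θ i - θ' i) ^ 2) / 2
          = Real.exp (2 * τ) / (2 * d) * ∑ i, (θ i - θ' i) ^ 2 := by field_simp
        _ ≤ _ := by
            gcongr ?_ / _ * _
            exact Real.exp_le_exp.2 (by linarith)
end

section
/- Fix d ≥ 1 and R > 0. For every θ ∈ ℝ^d with ‖θ‖₁ ≤ R, the minimum coordinate of softmax(θ) satisfies minᵢ softmax(θ)ᵢ ≥ 1/((d−1)·e^R + 1), and equality is attained at θ = (−R, 0, …, 0). -/
/-!
For `j ≠ i` the entries `|θ i|` and `|θ j|` are distinct summands of `‖θ‖₁`, so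
`θ j - θ i ≤ |θ i| + |θ j| ≤ R`, that is `exp (θ j) ≤ exp R * exp (θ i)`. Summing over the `d - 1`
indices `j ≠ i` bounds the partition function by `((d - 1) * exp R + 1) * exp (θ i)`.
At `(-R, 0, …, 0)` with `i` the first index, each of these inequalities is an equality.
-/

open Finset

/-- For every θ with ‖θ‖₁ ≤ R, every coordinate of softmax(θ) is at least
1/((d−1)·e^R + 1), and equality is attained at θ = (−R, 0, …, 0) in the first
coordinate (which is the minimal one). -/
theorem softmax_min_coord (d : ℕ) (hd : 1 ≤ d) (R : ℝ) (hR : 0 < R) :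
    (∀ θ : Fin d → ℝ, (∑ i, |θ i|) ≤ R →
      ∀ i, 1 / (((d : ℝ) - 1) * Real.exp R + 1) ≤ softmax θ i) ∧
    ((∑ i, |(fun i : Fin d => if i = ⟨0, hd⟩ then -R else 0) i|) ≤ R ∧
      softmax (fun i : Fin d => if i = ⟨0, hd⟩ then -R else 0) ⟨0, hd⟩
        = 1 / (((d : ℝ) - 1) * Real.exp R + 1)) := by
  have card_erase : ∀ i : Fin d, ((univ.erase i).card : ℝ) = (d : ℝ) - 1 := by
    intro i
    rw [card_erase_of_mem (mem_univ i), card_univ, Fintype.card_fin, Nat.cast_sub hd, Nat.cast_one]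
  have hd' : (1 : ℝ) ≤ d := by exact_mod_cast hd
  have hpos : 0 < ((d : ℝ) - 1) * Real.exp R + 1 := by
    have := mul_nonneg (sub_nonneg.2 hd') (Real.exp_pos R).le
    linarith
  refine ⟨fun θ hθ i => ?_, ?_, ?_⟩
  · have hS : 0 < ∑ j, Real.exp (θ j) := sum_pos (fun j _ => Real.exp_pos _) ⟨i, mem_univ i⟩
    have hj : ∀ j ∈ univ.erase i, Real.exp (θ j) ≤ Real.exp R * Real.exp (θ i) := by
      intro j hj
      rw [← Real.exp_add, Real.exp_le_exp]
      have hpair : |θ i| + |θ j| ≤ ∑ k, |θ k| := by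
        rw [← add_sum_erase univ (fun k => |θ k|) (mem_univ i)]
        gcongr
        exact single_le_sum (f := fun k => |θ k|) (fun k _ => abs_nonneg _) hj
      linarith [le_abs_self (θ j), neg_abs_le (θ i)]
    have hsum := sum_le_card_nsmul _ _ _ hj
    rw [nsmul_eq_mul, card_erase] at hsum
    rw [softmax, div_le_div_iff₀ hpos hS, ← add_sum_erase univ _ (mem_univ i)]
    linarith
  · simp only [apply_ite abs, abs_neg, abs_zero, sum_ite_eq', mem_univ, if_true, abs_of_pos hR,
      le_refl]
  · have hrest : ∑ j ∈ univ.erase (⟨0, hd⟩ : Fin d),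
        Real.exp (if j = ⟨0, hd⟩ then -R else 0) = (d : ℝ) - 1 := by
      rw [← card_erase ⟨0, hd⟩, sum_congr rfl (g := fun _ => (1 : ℝ))]
      · simp only [sum_const, nsmul_eq_mul, mul_one]
      · intro j hj
        rw [if_neg (ne_of_mem_erase hj), Real.exp_zero]
    have hS : 0 < Real.exp (-R) + ((d : ℝ) - 1) := by linarith [Real.exp_pos (-R)]
    have hexp : Real.exp (-R) * Real.exp R = 1 := by rw [← Real.exp_add, neg_add_cancel, Real.exp_zero]
    rw [softmax, ← add_sum_erase univ _ (mem_univ (⟨0, hd⟩ : Fin d)), hrest, if_pos rfl,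
      div_eq_div_iff hS.ne' hpos.ne']
    linear_combination ((d : ℝ) - 1) * hexp
end

section
/- Let X and A be finite sets, D a probability distribution on X, φ: X×A → ℝ^d a feature map with ‖φ(x,a)‖₂ ≤ 1 for all (x,a), and π₀ a base policy with full support. For θ, θ' ∈ ℝ^d, the linear softmax policies π_θ and π_{θ'} satisfy: (i) sup_{x,a} π_{θ'}(a|x)/π_θ(a|x) ≤ exp(2·‖θ − θ'‖₂), and (ii) V(π_{θ'}) ⪯ (sup_{x,a} π_{θ'}(a|x)/π_θ(a|x)) · V(π_θ) in the Loewner order; consequently the coverage C_{π_θ→π_{θ'}} = inf{C > 0 : V(π_{θ'}) ⪯ C·V(π_θ)} is at most exp(2·‖θ − θ'‖₂). -/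
/-!
The density ratio bound is Cauchy-Schwarz: since `‖φ x a‖₂ ≤ 1`, replacing `θ` by `θ'` changes each
exponent by at most `s = ‖θ - θ'‖₂`, so it changes both the weight of an action and the normalising
constant by a factor of at most `exp s` (`pol_le`).

For the Loewner bound, the quadratic form of `covMat` at `v` is the `D`-average of the variances of
the scalar feature `vᵀφ` (`quad_covMat`). A variance is the minimum over `c` of the second moment
about `c`; so if `p' ≤ R p`, then the variance under `p'` is at most the second moment under `p'`
about the mean of `p`, hence at most `R` times the variance under `p` (`var_le`). This holds for
every pointwise bound `R` on the density ratio: the supremum of the ratios gives (ii), and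
`exp (2 s)` is itself a member of the set whose infimum is the coverage.
-/

open Finset Matrix

/-- Linear softmax policy: π_θ(a|x) ∝ π₀(a|x)·exp(θᵀφ(x,a)). -/
noncomputable def pol {X A : Type*} [Fintype A] {d : ℕ}
    (π₀ : X → A → ℝ) (φ : X → A → Fin d → ℝ) (θ : Fin d → ℝ) (x : X) (a : A) : ℝ :=
  π₀ x a * Real.exp (∑ i, θ i * φ x a i) /
    ∑ b, π₀ x b * Real.exp (∑ i, θ i * φ x b i)

/-- Mean feature of policy π at prompt x. -/
noncomputable def featMean {X A : Type*} [Fintype A] {d : ℕ}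
    (φ : X → A → Fin d → ℝ) (π : X → A → ℝ) (x : X) (i : Fin d) : ℝ :=
  ∑ a, π x a * φ x a i

/-- Feature covariance matrix V(π) = E_{x∼D,a∼π(x)}[(φ − E φ)(φ − E φ)ᵀ]. -/
noncomputable def covMat {X A : Type*} [Fintype X] [Fintype A] {d : ℕ}
    (D : X → ℝ) (φ : X → A → Fin d → ℝ) (π : X → A → ℝ) : Matrix (Fin d) (Fin d) ℝ :=
  Matrix.of fun i j => ∑ x, D x * ∑ a, π x a *
    ((φ x a i - featMean φ π x i) * (φ x a j - featMean φ π x j))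

/-- Loewner order on matrices: M ⪯ N iff N − M is positive semidefinite. -/
def LoewnerLE {d : ℕ} (M N : Matrix (Fin d) (Fin d) ℝ) : Prop := (N - M).PosSemidef

/-- The quadratic form of the feature covariance is the averaged variance of `vᵀφ`. -/
lemma quad_covMat {X A : Type*} [Fintype X] [Fintype A] {d : ℕ}
    (D : X → ℝ) (φ : X → A → Fin d → ℝ) (π : X → A → ℝ) (v : Fin d → ℝ) :
    v ⬝ᵥ (covMat D φ π *ᵥ v) = ∑ x, D x * ∑ a, π x a *
      (∑ i, v i * φ x a i - ∑ b, π x b * ∑ i, v i * φ x b i) ^ 2 := by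
  have hm : ∀ x, ∑ b, π x b * ∑ i, v i * φ x b i = ∑ i, v i * featMean φ π x i := by
    intro x
    simp only [featMean, mul_sum]
    rw [sum_comm]
    exact sum_congr rfl fun i _ => sum_congr rfl fun b _ => by ring
  simp only [hm, ← sum_sub_distrib, ← mul_sub]
  simp only [dotProduct, mulVec, covMat, of_apply, sq, mul_sum, sum_mul]
  rw [sum_congr rfl fun i _ => sum_comm, sum_comm]
  refine sum_congr rfl fun x _ => ?_
  rw [sum_congr rfl fun i _ => sum_comm, sum_comm]
  refine sum_congr rfl fun a _ => ?_
  rw [sum_comm]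
  exact sum_congr rfl fun j _ => sum_congr rfl fun i _ => by ring

/-- The mean minimises the second moment about a point. -/
lemma var_le_moment {A : Type*} [Fintype A] (p h : A → ℝ) (hp1 : ∑ a, p a = 1) (c : ℝ) :
    ∑ a, p a * (h a - ∑ b, p b * h b) ^ 2 ≤ ∑ a, p a * (h a - c) ^ 2 := by
  have key : ∀ c : ℝ, ∑ a, p a * (h a - c) ^ 2 =
      ∑ a, p a * h a ^ 2 - 2 * c * ∑ a, p a * h a + c ^ 2 := by
    intro c
    have : c ^ 2 = c ^ 2 * ∑ a, p a := by rw [hp1, mul_one]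
    rw [this, mul_sum, mul_sum, ← sum_sub_distrib, ← sum_add_distrib]
    exact sum_congr rfl fun a _ => by ring
  rw [key, key]
  nlinarith [sq_nonneg (c - ∑ a, p a * h a)]

/-- Scalar change of measure: both centrings are the means of the respective weights. -/
lemma var_le {A : Type*} [Fintype A] (p p' h : A → ℝ) (R : ℝ)
    (hp1 : ∑ a, p' a = 1) (hR : ∀ a, p' a ≤ R * p a) :
    ∑ a, p' a * (h a - ∑ b, p' b * h b) ^ 2 ≤
      R * ∑ a, p a * (h a - ∑ b, p b * h b) ^ 2 := by
  refine (var_le_moment p' h hp1 (∑ b, p b * h b)).trans ?_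
  rw [mul_sum]
  refine sum_le_sum fun a _ => ?_
  rw [← mul_assoc]
  exact mul_le_mul_of_nonneg_right (hR a) (sq_nonneg _)

lemma covMat_isHermitian {X A : Type*} [Fintype X] [Fintype A] {d : ℕ}
    (D : X → ℝ) (φ : X → A → Fin d → ℝ) (π : X → A → ℝ) : (covMat D φ π).IsHermitian := by
  ext i j
  simp only [conjTranspose_apply, covMat, of_apply, star_trivial]
  simp only [mul_comm]

/-- A pointwise bound `R` on the density ratio of two policies transfers to their feature
covariances. -/
lemma loewner_of_ratio {X A : Type*} [Fintype X] [Fintype A] {d : ℕ}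
    (D : X → ℝ) (hD : ∀ x, 0 ≤ D x) (φ : X → A → Fin d → ℝ) (π π' : X → A → ℝ) (R : ℝ)
    (h1 : ∀ x, ∑ a, π' x a = 1) (hR : ∀ x a, π' x a ≤ R * π x a) :
    LoewnerLE (covMat D φ π') (R • covMat D φ π) := by
  refine .of_dotProduct_mulVec_nonneg ?_ fun v => ?_
  · have h := covMat_isHermitian D φ π
    have h' := covMat_isHermitian D φ π'
    unfold IsHermitian at *
    rw [conjTranspose_sub, conjTranspose_smul, h, h', star_trivial]
  · rw [star_trivial, sub_mulVec, dotProduct_sub, smul_mulVec, dotProduct_smul, smul_eq_mul,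
      quad_covMat, quad_covMat, sub_nonneg, mul_sum]
    refine sum_le_sum fun x _ => ?_
    rw [mul_left_comm]
    exact mul_le_mul_of_nonneg_left
      (var_le (π x) (π' x) (fun a => ∑ i, v i * φ x a i) R (h1 x) (hR x)) (hD x)

lemma partition_pos {X A : Type*} [Fintype A] [Nonempty A] {d : ℕ}
    (π₀ : X → A → ℝ) (hπ₀ : ∀ x a, 0 < π₀ x a) (φ : X → A → Fin d → ℝ) (θ : Fin d → ℝ) (x : X) :
    0 < ∑ b, π₀ x b * Real.exp (∑ i, θ i * φ x b i) :=
  sum_pos (fun b _ => mul_pos (hπ₀ x b) (Real.exp_pos _)) univ_nonempty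

lemma pol_pos {X A : Type*} [Fintype A] [Nonempty A] {d : ℕ}
    (π₀ : X → A → ℝ) (hπ₀ : ∀ x a, 0 < π₀ x a) (φ : X → A → Fin d → ℝ) (θ : Fin d → ℝ)
    (x : X) (a : A) : 0 < pol π₀ φ θ x a :=
  div_pos (mul_pos (hπ₀ x a) (Real.exp_pos _)) (partition_pos π₀ hπ₀ φ θ x)

lemma pol_sum {X A : Type*} [Fintype A] [Nonempty A] {d : ℕ}
    (π₀ : X → A → ℝ) (hπ₀ : ∀ x a, 0 < π₀ x a) (φ : X → A → Fin d → ℝ) (θ : Fin d → ℝ) (x : X) :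
    ∑ a, pol π₀ φ θ x a = 1 := by
  simp only [pol]
  rw [← sum_div, div_self (partition_pos π₀ hπ₀ φ θ x).ne']

lemma abs_score_sub_le {d : ℕ} (f θ θ' : Fin d → ℝ) (hf : ∑ i, f i ^ 2 ≤ 1) :
    |∑ i, θ i * f i - ∑ i, θ' i * f i| ≤ √(∑ i, (θ i - θ' i) ^ 2) := by
  apply Real.abs_le_sqrt
  rw [← sum_sub_distrib]
  simp only [← sub_mul]
  refine (sum_mul_sq_le_sq_mul_sq _ _ _).trans ?_
  exact mul_le_of_le_one_right (sum_nonneg fun i _ => sq_nonneg _) hf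

/-- The factor `2` in the exponent is one `s` from the weight of `a` and one from the normalising
constant, with `s = ‖θ - θ'‖₂`. -/
lemma pol_le {X A : Type*} [Fintype A] [Nonempty A] {d : ℕ}
    (φ : X → A → Fin d → ℝ) (hφ : ∀ x a, ∑ i, (φ x a i) ^ 2 ≤ 1)
    (π₀ : X → A → ℝ) (hπ₀ : ∀ x a, 0 < π₀ x a) (θ θ' : Fin d → ℝ) (x : X) (a : A) :
    pol π₀ φ θ' x a ≤ Real.exp (2 * √(∑ i, (θ i - θ' i) ^ 2)) * pol π₀ φ θ x a := by
  have hs := fun b => abs_le.mp (abs_score_sub_le (φ x b) θ θ' (hφ x b))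
  set s := √(∑ i, (θ i - θ' i) ^ 2)
  have hnum : π₀ x a * Real.exp (∑ i, θ' i * φ x a i) ≤
      Real.exp s * (π₀ x a * Real.exp (∑ i, θ i * φ x a i)) := by
    rw [mul_left_comm, ← Real.exp_add]
    refine mul_le_mul_of_nonneg_left (Real.exp_le_exp.mpr ?_) (hπ₀ x a).le
    linarith [(hs a).1]
  have hden : ∑ b, π₀ x b * Real.exp (∑ i, θ i * φ x b i) ≤
      Real.exp s * ∑ b, π₀ x b * Real.exp (∑ i, θ' i * φ x b i) := by
    rw [mul_sum]
    refine sum_le_sum fun b _ => ?_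
    rw [mul_left_comm, ← Real.exp_add]
    refine mul_le_mul_of_nonneg_left (Real.exp_le_exp.mpr ?_) (hπ₀ x b).le
    linarith [(hs b).2]
  have hN := mul_pos (hπ₀ x a) (Real.exp_pos (∑ i, θ i * φ x a i))
  have hZ := partition_pos π₀ hπ₀ φ θ x
  have hZ' := partition_pos π₀ hπ₀ φ θ' x
  unfold pol
  rw [← mul_div_assoc, div_le_div_iff₀ hZ' hZ]
  calc _ ≤ _ := mul_le_mul hnum hden hZ.le (by positivity)
    _ = _ := by rw [two_mul, Real.exp_add]; ring

/-- Worst-case coverage bound: (i) the density ratio of π_{θ'} over π_θ is at most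
exp(2‖θ−θ'‖₂); (ii) V(π_{θ'}) ⪯ (sup ratio)·V(π_θ); hence the coverage
C_{π_θ→π_{θ'}} = inf{C > 0 : V(π_{θ'}) ⪯ C·V(π_θ)} is at most exp(2‖θ−θ'‖₂). -/
theorem coverage_le_density_ratio {X A : Type*} [Fintype X] [Fintype A]
    [Nonempty X] [Nonempty A] (d : ℕ)
    (D : X → ℝ) (hD : ∀ x, 0 ≤ D x) (hD1 : ∑ x, D x = 1)
    (φ : X → A → Fin d → ℝ) (hφ : ∀ x a, ∑ i, (φ x a i)^2 ≤ 1)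
    (π₀ : X → A → ℝ) (hπ₀ : ∀ x a, 0 < π₀ x a) (hπ₀1 : ∀ x, ∑ a, π₀ x a = 1)
    (θ θ' : Fin d → ℝ) :
    (∀ x a, pol π₀ φ θ' x a / pol π₀ φ θ x a
        ≤ Real.exp (2 * Real.sqrt (∑ i, (θ i - θ' i)^2))) ∧
    LoewnerLE (covMat D φ (pol π₀ φ θ'))
      ((sSup {t : ℝ | ∃ x a, t = pol π₀ φ θ' x a / pol π₀ φ θ x a}) •
        covMat D φ (pol π₀ φ θ)) ∧
    sInf {C : ℝ | 0 < C ∧ LoewnerLE (covMat D φ (pol π₀ φ θ')) (C • covMat D φ (pol π₀ φ θ))}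
        ≤ Real.exp (2 * Real.sqrt (∑ i, (θ i - θ' i)^2)) := by
  have hle := pol_le φ hφ π₀ hπ₀ θ θ'
  have hpos := pol_pos π₀ hπ₀ φ θ
  have hsum := pol_sum π₀ hπ₀ φ θ'
  have hratio : ∀ x a, pol π₀ φ θ' x a / pol π₀ φ θ x a
      ≤ Real.exp (2 * Real.sqrt (∑ i, (θ i - θ' i)^2)) :=
    fun x a => (div_le_iff₀ (hpos x a)).mpr (hle x a)
  refine ⟨hratio, ?_, ?_⟩
  · refine loewner_of_ratio D hD φ _ _ _ hsum fun x a => ?_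
    rw [← div_le_iff₀ (hpos x a)]
    -- The set of ratios is bounded above by (i), so its `sSup` is a genuine supremum.
    refine le_csSup ⟨Real.exp (2 * Real.sqrt (∑ i, (θ i - θ' i)^2)), ?_⟩ ⟨x, a, rfl⟩
    rintro t ⟨y, b, rfl⟩
    exact hratio y b
  · exact csInf_le ⟨0, fun C hC => hC.1.le⟩
      ⟨Real.exp_pos _, loewner_of_ratio D hD φ _ _ _ hsum hle⟩
end

section
/- Let X and A be finite sets, φ: X×A → ℝ^d a feature map with ‖φ(x,a)‖₂ ≤ 1, π₀ a base policy with full support, and γ > 0. For a policy π and parameters θ, θ' ∈ ℝ^d define the induced preference probability P_{π_θ,π}(a¹ ≻ a² | x) = σ(γ·ln(π_θ(a¹|x)/π_θ(a²|x)) − γ·ln(π(a¹|x)/π(a²|x))). Then for all x ∈ X and a¹, a² ∈ A: (i) |P_{π_θ,π}(a¹ ≻ a²|x) − P_{π_{θ'},π}(a¹ ≻ a²|x)| ≤ (γ/2)·‖θ − θ'‖₂, and (ii) |ln P_{π_θ,π}(a¹ ≻ a²|x) − ln P_{π_{θ'},π}(a¹ ≻ a²|x)| ≤ 2γ·‖θ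 − θ'‖₂. -/
open Finset

/-- Induced preference probability P_{π,π'}(a¹ ≻ a²|x). -/
noncomputable def prefProb {X A : Type*} (γ : ℝ) (π π' : X → A → ℝ)
    (x : X) (a1 a2 : A) : ℝ :=
  sigmoid (γ * Real.log (π x a1 / π x a2) - γ * Real.log (π' x a1 / π' x a2))

/-!
The logit `γ ln(π_θ(a¹|x)/π_θ(a²|x)) - γ ln(π(a¹|x)/π(a²|x))` is affine in `θ`, because the softmax
normalisers cancel in the ratio. Replacing `θ` by `θ'` changes it by
`γ ⟨θ - θ', φ(x,a¹) - φ(x,a²)⟩`, which is at most `2γ‖θ - θ'‖` in absolute value by Cauchy–Schwarz.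
Both bounds follow since `σ' = σ(1 - σ) ≤ 1/4` and `(ln σ)' = 1 - σ ≤ 1`, so that `σ` is
`1/4`-Lipschitz and `ln ∘ σ` is `1`-Lipschitz.
-/

lemma sigmoid_eq_real_sigmoid (z : ℝ) : sigmoid z = Real.sigmoid z := by
  rw [sigmoid, Real.sigmoid_def, one_div]

lemma abs_sigmoid_sub_le (u v : ℝ) : |sigmoid u - sigmoid v| ≤ 1 / 4 * |u - v| := by
  rw [sigmoid_eq_real_sigmoid, sigmoid_eq_real_sigmoid]
  have h := convex_univ.norm_image_sub_le_of_norm_hasDerivWithin_le (C := 1 / 4)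
    (fun x _ => (Real.hasDerivAt_sigmoid x).hasDerivWithinAt) (fun x _ => ?_)
    (Set.mem_univ v) (Set.mem_univ u)
  · simpa only [Real.norm_eq_abs] using h
  · have h0 := Real.sigmoid_pos x
    have h1 := Real.sigmoid_lt_one x
    rw [Real.norm_eq_abs, abs_of_nonneg (mul_nonneg h0.le (sub_nonneg.2 h1.le))]
    nlinarith [sq_nonneg (Real.sigmoid x - 1 / 2)]

lemma abs_log_sigmoid_sub_le (u v : ℝ) :
    |Real.log (sigmoid u) - Real.log (sigmoid v)| ≤ |u - v| := by
  rw [sigmoid_eq_real_sigmoid, sigmoid_eq_real_sigmoid]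
  have h := convex_univ.norm_image_sub_le_of_norm_hasDerivWithin_le (C := 1)
    (fun x _ => ((Real.hasDerivAt_sigmoid x).log (Real.sigmoid_pos x).ne').hasDerivWithinAt)
    (fun x _ => ?_) (Set.mem_univ v) (Set.mem_univ u)
  · simpa only [Real.norm_eq_abs, one_mul] using h
  · have h0 := Real.sigmoid_pos x
    have h1 := Real.sigmoid_lt_one x
    rw [mul_div_cancel_left₀ _ h0.ne', Real.norm_eq_abs, abs_of_nonneg (sub_nonneg.2 h1.le)]
    linarith

/-- The log-ratio of two softmax probabilities does not involve the normaliser. -/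
lemma log_pol_div_pol {X A : Type*} [Fintype A] [Nonempty A] {d : ℕ}
    (φ : X → A → Fin d → ℝ) (π₀ : X → A → ℝ) (hπ₀ : ∀ x a, 0 < π₀ x a)
    (θ : Fin d → ℝ) (x : X) (a1 a2 : A) :
    Real.log (pol π₀ φ θ x a1 / pol π₀ φ θ x a2) =
      Real.log (π₀ x a1) - Real.log (π₀ x a2)
        + (∑ i, θ i * φ x a1 i - ∑ i, θ i * φ x a2 i) := by
  have hZ : (∑ b, π₀ x b * Real.exp (∑ i, θ i * φ x b i)) ≠ 0 :=
    (Finset.sum_pos (fun b _ => mul_pos (hπ₀ x b) (Real.exp_pos _)) Finset.univ_nonempty).ne'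
  rw [pol, pol, div_div_div_cancel_right₀ hZ,
    Real.log_div (mul_pos (hπ₀ x a1) (Real.exp_pos _)).ne'
      (mul_pos (hπ₀ x a2) (Real.exp_pos _)).ne',
    Real.log_mul (hπ₀ x a1).ne' (Real.exp_pos _).ne',
    Real.log_mul (hπ₀ x a2).ne' (Real.exp_pos _).ne', Real.log_exp, Real.log_exp]
  ring

/-- Cauchy–Schwarz against a vector of Euclidean norm at most one. -/
lemma abs_sum_mul_le_sqrt {d : ℕ} (w f : Fin d → ℝ) (hf : ∑ i, (f i) ^ 2 ≤ 1) :
    |∑ i, w i * f i| ≤ Real.sqrt (∑ i, (w i) ^ 2) := by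
  apply Real.abs_le_sqrt
  have h := Finset.sum_mul_sq_le_sq_mul_sq Finset.univ w f
  exact h.trans (mul_le_of_le_one_right (Finset.sum_nonneg fun i _ => sq_nonneg _) hf)

/-- Lipschitz bounds for induced preference probabilities:
|P_{π_θ,π} − P_{π_{θ'},π}| ≤ (γ/2)·‖θ−θ'‖₂ and
|ln P_{π_θ,π} − ln P_{π_{θ'},π}| ≤ 2γ·‖θ−θ'‖₂. -/
theorem prefProb_lipschitz {X A : Type*} [Fintype X] [Fintype A]
    [Nonempty X] [Nonempty A] (d : ℕ)
    (φ : X → A → Fin d → ℝ) (hφ : ∀ x a, ∑ i, (φ x a i)^2 ≤ 1)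
    (π₀ : X → A → ℝ) (hπ₀ : ∀ x a, 0 < π₀ x a) (hπ₀1 : ∀ x, ∑ a, π₀ x a = 1)
    (γ : ℝ) (hγ : 0 < γ)
    (π : X → A → ℝ) (hπ : ∀ x a, 0 < π x a) (hπ1 : ∀ x, ∑ a, π x a = 1)
    (θ θ' : Fin d → ℝ) :
    ∀ (x : X) (a1 a2 : A),
      |prefProb γ (pol π₀ φ θ) π x a1 a2 - prefProb γ (pol π₀ φ θ') π x a1 a2|
          ≤ γ / 2 * Real.sqrt (∑ i, (θ i - θ' i)^2) ∧
      |Real.log (prefProb γ (pol π₀ φ θ) π x a1 a2)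
          - Real.log (prefProb γ (pol π₀ φ θ') π x a1 a2)|
          ≤ 2 * γ * Real.sqrt (∑ i, (θ i - θ' i)^2) := by
  intro x a1 a2
  have key : |(γ * Real.log (pol π₀ φ θ x a1 / pol π₀ φ θ x a2)
        - γ * Real.log (π x a1 / π x a2))
      - (γ * Real.log (pol π₀ φ θ' x a1 / pol π₀ φ θ' x a2)
        - γ * Real.log (π x a1 / π x a2))|
      ≤ 2 * γ * Real.sqrt (∑ i, (θ i - θ' i) ^ 2) := by
    have h1 := abs_sum_mul_le_sqrt (fun i => θ i - θ' i) (φ x a1) (hφ x a1)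
    have h2 := abs_sum_mul_le_sqrt (fun i => θ i - θ' i) (φ x a2) (hφ x a2)
    have e : (γ * Real.log (pol π₀ φ θ x a1 / pol π₀ φ θ x a2)
          - γ * Real.log (π x a1 / π x a2))
        - (γ * Real.log (pol π₀ φ θ' x a1 / pol π₀ φ θ' x a2)
          - γ * Real.log (π x a1 / π x a2))
        = γ * (∑ i, (θ i - θ' i) * φ x a1 i - ∑ i, (θ i - θ' i) * φ x a2 i) := by
      simp only [log_pol_div_pol φ π₀ hπ₀, sub_mul, Finset.sum_sub_distrib]
      ring
    rw [e, abs_mul, abs_of_pos hγ, mul_comm 2 γ, mul_assoc]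
    refine mul_le_mul_of_nonneg_left ?_ hγ.le
    exact (abs_sub _ _).trans (by linarith)
  refine ⟨(abs_sigmoid_sub_le _ _).trans ?_, (abs_log_sigmoid_sub_le _ _).trans key⟩
  linarith
end

section
/- Let X and A be finite sets and φ: X×A → ℝ^d a feature map. For a joint probability distribution π on X×A with conditional distributions π(·|x), define φ(x, π(·|x)) = E_{a∼π(·|x)}[φ(x,a)] and V(π) = E_{(x,a)∼π}[(φ(x,a) − φ(x, π(·|x)))(φ(x,a) − φ(x, π(·|x)))ᵀ]. Then the map π ↦ V(π) is concave in the Loewner order: for any joint distributions π¹, π² on X×A and λ ∈ (0,1), V(λπ¹ + (1−λ)π²) ⪰ λ·V(π¹) + (1−λ)·V(π²). -/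
/-!
For a vector `v`, the quadratic form `vᵀ V(π) v` is the sum over `x` of the weighted squared
deviation of the scalar feature `a ↦ v ⬝ φ x a` from its conditional mean. The conditional mean
minimizes the weighted squared deviation among all centres (`sum_sq_dev_mean_le`), so `vᵀ V(π) v`
is a minimum over centres `c` of functionals that are linear in `π`, hence concave in `π`.
Concretely, the centre of the mixture is a competitor in the minimization for each of `π₁`, `π₂`.
-/

open Finset Matrix

/-- Conditional mean feature φ(x, π(·|x)) = E_{a∼π(·|x)}[φ(x,a)] of a joint
distribution π on X×A (represented as π : X → A → ℝ). -/
noncomputable def condMean {X A : Type*} [Fintype A] {d : ℕ}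
    (φ : X → A → Fin d → ℝ) (π : X → A → ℝ) (x : X) (i : Fin d) : ℝ :=
  ∑ a, (π x a / ∑ b, π x b) * φ x a i

/-- Conditionally-centered feature covariance V(π) of a joint distribution π on X×A. -/
noncomputable def covJoint {X A : Type*} [Fintype X] [Fintype A] {d : ℕ}
    (φ : X → A → Fin d → ℝ) (π : X → A → ℝ) : Matrix (Fin d) (Fin d) ℝ :=
  Matrix.of fun i j => ∑ x, ∑ a, π x a *
    ((φ x a i - condMean φ π x i) * (φ x a j - condMean φ π x j))

/-- The weighted mean minimizes the weighted squared deviation. The weights need not be normalized;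
if they sum to `0` they all vanish, and both sides are `0`. -/
theorem sum_sq_dev_mean_le {A : Type*} [Fintype A] (w g : A → ℝ) (hw : ∀ a, 0 ≤ w a) (c : ℝ) :
    ∑ a, w a * (g a - ∑ b, (w b / ∑ e, w e) * g b) ^ 2 ≤ ∑ a, w a * (g a - c) ^ 2 := by
  set W := ∑ e, w e with hW
  set m := ∑ b, (w b / W) * g b with hm
  have hW0 : 0 ≤ W := Finset.sum_nonneg fun a _ => hw a
  have key : ∑ a, w a * g a = W * m := by
    rw [hm, Finset.mul_sum]
    refine Finset.sum_congr rfl fun a _ => ?_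
    by_cases h : W = 0
    · have : w a = 0 :=
        (Finset.sum_eq_zero_iff_of_nonneg fun a _ => hw a).1 (hW ▸ h) a (Finset.mem_univ a)
      simp [this]
    · field_simp
  have expand : ∑ a, w a * (g a - c) ^ 2 - ∑ a, w a * (g a - m) ^ 2 = W * (m - c) ^ 2 := by
    calc _ = ∑ a, (2 * (m - c) * (w a * g a) - (m - c) * (m + c) * w a) := by
          rw [← Finset.sum_sub_distrib]
          exact Finset.sum_congr rfl fun a _ => by ring
      _ = 2 * (m - c) * (W * m) - (m - c) * (m + c) * W := by
          rw [Finset.sum_sub_distrib, ← Finset.mul_sum, ← Finset.mul_sum, key]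
      _ = _ := by ring
  have := mul_nonneg hW0 (sq_nonneg (m - c))
  linarith

theorem dotProduct_condMean {X A : Type*} [Fintype A] {d : ℕ}
    (φ : X → A → Fin d → ℝ) (π : X → A → ℝ) (v : Fin d → ℝ) (x : X) :
    v ⬝ᵥ condMean φ π x = ∑ a, (π x a / ∑ b, π x b) * (v ⬝ᵥ φ x a) := by
  simp only [dotProduct, condMean, Finset.mul_sum]
  rw [Finset.sum_comm]
  exact Finset.sum_congr rfl fun a _ => Finset.sum_congr rfl fun i _ => by ring

theorem covJoint_quadForm {X A : Type*} [Fintype X] [Fintype A] {d : ℕ}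
    (φ : X → A → Fin d → ℝ) (π : X → A → ℝ) (v : Fin d → ℝ) :
    v ⬝ᵥ (covJoint φ π *ᵥ v) =
      ∑ x, ∑ a, π x a * (v ⬝ᵥ φ x a - v ⬝ᵥ condMean φ π x) ^ 2 := by
  have h : covJoint φ π = ∑ x, ∑ a, π x a •
      vecMulVec (φ x a - condMean φ π x) (φ x a - condMean φ π x) := by
    ext i j
    simp [covJoint, Matrix.sum_apply, vecMulVec_apply]
  simp only [h, sum_mulVec, dotProduct_sum, smul_mulVec, dotProduct_smul, vecMulVec_mulVec]
  refine Finset.sum_congr rfl fun x _ => Finset.sum_congr rfl fun a _ => ?_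
  rw [← dotProduct_sub, dotProduct_comm (φ x a - condMean φ π x) v]
  simp [sq]

theorem covJoint_isHermitian {X A : Type*} [Fintype X] [Fintype A] {d : ℕ}
    (φ : X → A → Fin d → ℝ) (π : X → A → ℝ) : (covJoint φ π).IsHermitian := by
  ext i j
  simp [covJoint, mul_comm]

/-- Replacing the conditional mean of `π` by that of any other `ρ` can only increase the
quadratic form. -/
theorem covJoint_quadForm_le {X A : Type*} [Fintype X] [Fintype A] {d : ℕ}
    (φ : X → A → Fin d → ℝ) (π ρ : X → A → ℝ) (hπ : ∀ x a, 0 ≤ π x a) (v : Fin d → ℝ) :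
    v ⬝ᵥ (covJoint φ π *ᵥ v) ≤
      ∑ x, ∑ a, π x a * (v ⬝ᵥ φ x a - v ⬝ᵥ condMean φ ρ x) ^ 2 := by
  rw [covJoint_quadForm]
  refine Finset.sum_le_sum fun x _ => ?_
  rw [dotProduct_condMean φ π]
  exact sum_sq_dev_mean_le (π x) (fun a => v ⬝ᵥ φ x a) (hπ x) _

/-- The map π ↦ V(π) is concave in the Loewner order:
V(λπ¹ + (1−λ)π²) ⪰ λ·V(π¹) + (1−λ)·V(π²). -/
theorem covJoint_concave {X A : Type*} [Fintype X] [Fintype A] (d : ℕ)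
    (φ : X → A → Fin d → ℝ)
    (π₁ π₂ : X → A → ℝ)
    (h₁ : ∀ x a, 0 ≤ π₁ x a) (h₁s : ∑ x, ∑ a, π₁ x a = 1)
    (h₂ : ∀ x a, 0 ≤ π₂ x a) (h₂s : ∑ x, ∑ a, π₂ x a = 1)
    (l : ℝ) (hl : l ∈ Set.Ioo (0:ℝ) 1) :
    LoewnerLE (l • covJoint φ π₁ + (1 - l) • covJoint φ π₂)
      (covJoint φ (fun x a => l * π₁ x a + (1 - l) * π₂ x a)) := by
  have hl0 : 0 ≤ l := hl.1.le
  have hl1 : 0 ≤ 1 - l := sub_nonneg.2 hl.2.le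
  set ρ : X → A → ℝ := fun x a => l * π₁ x a + (1 - l) * π₂ x a with hρ
  refine PosSemidef.of_dotProduct_mulVec_nonneg ?_ fun v => ?_
  · refine (covJoint_isHermitian φ ρ).sub (IsHermitian.add ?_ ?_)
    · exact (covJoint_isHermitian φ π₁).smul (IsSelfAdjoint.all l)
    · exact (covJoint_isHermitian φ π₂).smul (IsSelfAdjoint.all (1 - l))
  · have e₁ := mul_le_mul_of_nonneg_left (covJoint_quadForm_le φ π₁ ρ h₁ v) hl0
    have e₂ := mul_le_mul_of_nonneg_left (covJoint_quadForm_le φ π₂ ρ h₂ v) hl1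
    -- With the centre fixed to that of the mixture, the squared deviation is linear in the weights.
    have e : v ⬝ᵥ (covJoint φ ρ *ᵥ v) =
        l * ∑ x, ∑ a, π₁ x a * (v ⬝ᵥ φ x a - v ⬝ᵥ condMean φ ρ x) ^ 2 +
        (1 - l) * ∑ x, ∑ a, π₂ x a * (v ⬝ᵥ φ x a - v ⬝ᵥ condMean φ ρ x) ^ 2 := by
      rw [covJoint_quadForm]
      simp only [Finset.mul_sum, ← Finset.sum_add_distrib]
      refine Finset.sum_congr rfl fun x _ => Finset.sum_congr rfl fun a _ => ?_
      simp only [hρ]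
      ring
    simp only [star_trivial, sub_mulVec, add_mulVec, smul_mulVec, dotProduct_sub, dotProduct_add,
      dotProduct_smul, smul_eq_mul]
    linarith
end

section
/- Let A be a finite set and φ: A → ℝ^d a feature map such that the augmented vectors (1, φ(a)) ∈ ℝ^{d+1}, a ∈ A, span ℝ^{d+1}. For a probability distribution π on A write φ(π) = Σ_a π(a)·φ(a) and V(π) = Σ_a π(a)·(φ(a) − φ(π))(φ(a) − φ(π))ᵀ. Then min over π ∈ Δ(A) with V(π) invertible of max_{a∈A} (φ(a) − φ(π))ᵀ V(π)⁻¹ (φ(a) − φ(π)) equals exactly d; in particular there exists a 'centered G-optimal design' π^{cg} ∈ Δ(A) with V(π^{cg}) invertible and max_{a∈A} (φ(a) − φ(π^{cg}))ᵀ V(π^{cg})⁻¹ (φ(a) − φ(π^{cg})) = d. -/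
/-!
The argument is D-optimality. Mixing a design `π` with the point mass at `a`, with weight `t`,
turns the covariance into `(1 - t) • (V + t • x xᵀ)`, where `x = φ a - φ(π)`
(`designCov_mix`): the shift of the mean is absorbed into the factor `1 - t`. By the matrix
determinant lemma the determinant is therefore multiplied by `(1 - t) ^ d * (1 + t * g a)`, where
`g` is the centered G-objective (`det_designCov_mix`). At a maximizer of `|det V|` over the simplex
this factor is at most `1`, and letting `t → 0` gives `g a ≤ d`. The spanning hypothesis makes
the uniform design nondegenerate, so the maximum is nonzero. Conversely the `π`-average of `g` is
`trace (V⁻¹ V) = d` for every nondegenerate design (`sum_mul_gObj`), so some action has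
`d ≤ g a`.
-/

open Finset Matrix

/-- Mean feature of a design π on A. -/
noncomputable def designMean {A : Type*} [Fintype A] {d : ℕ}
    (φ : A → Fin d → ℝ) (π : A → ℝ) (i : Fin d) : ℝ :=
  ∑ a, π a * φ a i

/-- Centered covariance matrix V(π) = Σ_a π(a)·(φ(a)−φ(π))(φ(a)−φ(π))ᵀ. -/
noncomputable def designCov {A : Type*} [Fintype A] {d : ℕ}
    (φ : A → Fin d → ℝ) (π : A → ℝ) : Matrix (Fin d) (Fin d) ℝ :=
  Matrix.of fun i j => ∑ a, π a *
    ((φ a i - designMean φ π i) * (φ a j - designMean φ π j))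

/-- The centered G-optimal design objective at design π and action a:
(φ(a) − φ(π))ᵀ V(π)⁻¹ (φ(a) − φ(π)). -/
noncomputable def gObj {A : Type*} [Fintype A] {d : ℕ}
    (φ : A → Fin d → ℝ) (π : A → ℝ) (a : A) : ℝ :=
  (fun i => φ a i - designMean φ π i) ⬝ᵥ
    ((designCov φ π)⁻¹).mulVec (fun i => φ a i - designMean φ π i)

section Lemmas

variable {A : Type*} [Fintype A] {d : ℕ} (φ : A → Fin d → ℝ)

/-- The mean of the G-objective is `trace (V⁻¹ V)`. -/
lemma sum_mul_gObj (π : A → ℝ) (h : IsUnit (designCov φ π).det) :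
    ∑ a, π a * gObj φ π a = d := by
  have htr : ((designCov φ π)⁻¹ * designCov φ π).trace = d := by
    rw [Matrix.nonsing_inv_mul _ h]; simp
  rw [← htr]
  simp only [gObj, Matrix.trace, Matrix.diag, Matrix.mul_apply, dotProduct, Matrix.mulVec,
    Finset.mul_sum]
  rw [Finset.sum_comm]
  refine Finset.sum_congr rfl fun i _ => ?_
  rw [Finset.sum_comm]
  refine Finset.sum_congr rfl fun j _ => ?_
  simp only [designCov, Matrix.of_apply, Finset.mul_sum]
  exact Finset.sum_congr rfl fun a _ => by ring

/-- A weighted average of `gObj` equals `d`, so some action is at least as large. -/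
lemma exists_le_gObj (π : A → ℝ) (h0 : ∀ a, 0 ≤ π a) (h1 : ∑ a, π a = 1)
    (h : IsUnit (designCov φ π).det) : ∃ a, (d : ℝ) ≤ gObj φ π a := by
  by_contra! hlt
  have hle : ∀ a ∈ Finset.univ, π a * gObj φ π a ≤ π a * d := fun a _ =>
    mul_le_mul_of_nonneg_left (hlt a).le (h0 a)
  obtain ⟨a, -, ha⟩ : ∃ a ∈ (Finset.univ : Finset A), 0 < π a := by
    by_contra! hn
    have := Finset.sum_nonpos hn
    linarith
  have hs := Finset.sum_lt_sum hle
    ⟨a, Finset.mem_univ a, mul_lt_mul_of_pos_left (hlt a) ha⟩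
  rw [sum_mul_gObj φ π h, ← Finset.sum_mul, h1, one_mul] at hs
  exact lt_irrefl _ hs

/-- The covariance as a second moment minus the square of the mean. -/
lemma designCov_apply (π : A → ℝ) (h1 : ∑ a, π a = 1) (i j : Fin d) :
    designCov φ π i j =
      ∑ a, π a * (φ a i * φ a j) - designMean φ π i * designMean φ π j := by
  have key : ∀ m n : ℝ, ∑ a, π a * ((φ a i - m) * (φ a j - n)) =
      ∑ a, π a * (φ a i * φ a j) - n * designMean φ π i - m * designMean φ π j
        + m * n * ∑ a, π a := by
    intro m n
    simp only [designMean, Finset.mul_sum, ← Finset.sum_sub_distrib, ← Finset.sum_add_distrib]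
    exact Finset.sum_congr rfl fun a _ => by ring
  simp only [designCov, Matrix.of_apply]
  rw [key, h1]
  ring

/-- Moving mass `t` of a design towards the action `a` rescales the covariance by `1 - t` after a
rank-one update. -/
lemma designCov_mix [DecidableEq A] (π : A → ℝ) (h1 : ∑ a, π a = 1) (a : A) (t : ℝ) :
    designCov φ (fun b => (1 - t) * π b + t * (Pi.single a 1 : A → ℝ) b) =
      (1 - t) • (designCov φ π + Matrix.vecMulVec (t • fun i => φ a i - designMean φ π i)
        (fun i => φ a i - designMean φ π i)) := by
  have hlin : ∀ f : A → ℝ, ∑ b, ((1 - t) * π b + t * (Pi.single a 1 : A → ℝ) b) * f b =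
      (1 - t) * ∑ b, π b * f b + t * f a := by
    intro f
    have hs : ∑ b, (Pi.single a 1 : A → ℝ) b * f b = f a := by
      simp [Pi.single_apply]
    rw [← hs]
    simp only [Finset.mul_sum, ← Finset.sum_add_distrib]
    exact Finset.sum_congr rfl fun b _ => by ring
  have hmass : ∑ b, ((1 - t) * π b + t * (Pi.single a 1 : A → ℝ) b) = 1 := by
    have := hlin fun _ => 1
    simp only [mul_one, h1] at this
    linarith
  have hmean : ∀ i, designMean φ (fun b => (1 - t) * π b + t * (Pi.single a 1 : A → ℝ) b) i =
      (1 - t) * designMean φ π i + t * φ a i := fun i => hlin fun b => φ b i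
  ext i j
  rw [designCov_apply φ _ hmass, hlin fun b => φ b i * φ b j]
  simp only [hmean, Matrix.smul_apply, Matrix.add_apply, Matrix.vecMulVec_apply, Pi.smul_apply,
    smul_eq_mul, designCov_apply φ π h1]
  ring

lemma det_designCov_mix [DecidableEq A] (π : A → ℝ) (h1 : ∑ a, π a = 1)
    (h : IsUnit (designCov φ π).det) (a : A) (t : ℝ) :
    (designCov φ (fun b => (1 - t) * π b + t * (Pi.single a 1 : A → ℝ) b)).det =
      (1 - t) ^ d * (1 + t * gObj φ π a) * (designCov φ π).det := by
  rw [designCov_mix φ π h1, Matrix.det_smul, Matrix.vecMulVec_eq Unit,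
    Matrix.det_add_replicateCol_mul_replicateRow h]
  have : (replicateRow Unit (fun i => φ a i - designMean φ π i) * (designCov φ π)⁻¹ *
      replicateCol Unit (t • fun i => φ a i - designMean φ π i)) =
      Matrix.of fun _ _ => t * gObj φ π a := by
    ext u v
    rw [Matrix.mul_assoc, Matrix.replicateCol_smul, Matrix.mul_smul, Matrix.mul_smul,
      ← Matrix.replicateCol_mulVec, Matrix.smul_apply, Matrix.replicateRow_mul_replicateCol_apply]
    simp [gObj]
  rw [this]
  simp
  ring

/-- A vector in the kernel of the covariance of a fully supported design gives an affine function
vanishing on all features, hence on the whole space by the spanning hypothesis. -/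
lemma isUnit_det_designCov
    (hspan : Submodule.span ℝ
      (Set.range (fun a => (Fin.cons (1:ℝ) (φ a) : Fin (d+1) → ℝ))) = ⊤)
    (π : A → ℝ) (hpos : ∀ a, 0 < π a) : IsUnit (designCov φ π).det := by
  rw [isUnit_iff_ne_zero]
  intro hdet
  obtain ⟨v, hv, hVv⟩ := Matrix.exists_mulVec_eq_zero_iff.mpr hdet
  have hquad : ∑ a, π a * ((fun i => φ a i - designMean φ π i) ⬝ᵥ v) ^ 2 = 0 := by
    have hq : v ⬝ᵥ (designCov φ π).mulVec v = 0 := by rw [hVv]; simp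
    rw [← hq]
    simp only [dotProduct, Matrix.mulVec, designCov, Matrix.of_apply, sq, Finset.mul_sum,
      Finset.sum_mul]
    rw [Finset.sum_comm]
    refine Finset.sum_congr rfl fun i _ => ?_
    rw [Finset.sum_comm]
    refine Finset.sum_congr rfl fun j _ => Finset.sum_congr rfl fun a _ => by ring
  have hzero : ∀ a, (fun i => φ a i - designMean φ π i) ⬝ᵥ v = 0 := by
    intro a
    have := (Finset.sum_eq_zero_iff_of_nonneg
      (fun a _ => mul_nonneg (hpos a).le (sq_nonneg _))).mp hquad a (Finset.mem_univ a)
    simpa [(hpos a).ne'] using this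
  -- The affine function `x ↦ v ⬝ᵥ x - v ⬝ᵥ φ(π)`, as a linear form on the augmented space.
  let w : Fin (d + 1) → ℝ := Fin.cons (-(designMean φ π ⬝ᵥ v)) v
  have hw : dotProductBilin ℝ ℝ w = 0 := by
    refine LinearMap.ext_on_range hspan fun a => ?_
    have h := hzero a
    change (φ a - designMean φ π) ⬝ᵥ v = 0 at h
    rw [sub_dotProduct] at h
    change w ⬝ᵥ (Fin.cons (1:ℝ) (φ a) : Fin (d+1) → ℝ) = 0
    rw [dotProduct_comm, dotProduct, Fin.sum_univ_succ]
    simp only [w, Fin.cons_zero, Fin.cons_succ]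
    rw [dotProduct] at h
    linarith
  have hw0 : w = 0 := dotProduct_self_eq_zero.mp (LinearMap.congr_fun hw w)
  refine hv (funext fun i => ?_)
  simpa [w] using congr_fun hw0 i.succ

lemma continuous_det_designCov : Continuous fun π : A → ℝ => (designCov φ π).det := by
  refine Continuous.matrix_det (continuous_matrix fun i j => ?_)
  simp only [designCov, Matrix.of_apply, designMean]
  fun_prop

/-- First-order optimality at `t = 0` of the factor by which a mixture changes the determinant. -/
lemma le_of_forall_pow_mul_le_one (d : ℕ) (g : ℝ)
    (h : ∀ t : ℝ, 0 ≤ t → t ≤ 1 → (1 - t) ^ d * (1 + t * g) ≤ 1) : g ≤ d := by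
  by_contra! hlt
  have hd : (0 : ℝ) ≤ d := d.cast_nonneg
  have hg : 0 < g := hd.trans_lt hlt
  -- With Bernoulli, the factor is at least `1 + t * (g - d) - d * g * t ^ 2`, which exceeds `1`
  -- as soon as `0 < t` and `d * g * t < g - d`.
  set t : ℝ := (g - d) / (d * g + g + 1) with ht
  have hD : 0 < d * g + g + 1 := by positivity
  have htpos : 0 < t := div_pos (sub_pos.mpr hlt) hD
  have htD : t * (d * g + g + 1) = g - d := div_mul_cancel₀ _ hD.ne'
  have ht1 : t ≤ 1 := by
    rw [ht, div_le_one hD]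
    nlinarith [mul_nonneg hd hg.le]
  have hb : 1 - d * t ≤ (1 - t) ^ d := by
    have := one_add_mul_le_pow (a := -t) (by linarith) d
    rw [← sub_eq_add_neg] at this
    linarith
  have hp : 0 < 1 + t * g := by positivity
  have h2 := (mul_le_mul_of_nonneg_right hb hp.le).trans (h t htpos.le ht1)
  have h3 : 0 < t * (t * (g + 1)) := by positivity
  have h4 : t * (t * (d * g + g + 1)) = t * (g - d) := by rw [htD]
  nlinarith

end Lemmas

/-- Kiefer–Wolfowitz with centering: assuming the augmented features (1, φ(a)) span
ℝ^{d+1}, the min over designs π (with V(π) invertible) of max_a of the centered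
G-objective equals d: every design has max ≥ d, and some design π^{cg} attains
max = d. -/
theorem kiefer_wolfowitz_centered {A : Type*} [Fintype A] (d : ℕ)
    (φ : A → Fin d → ℝ)
    (hspan : Submodule.span ℝ
        (Set.range (fun a => (Fin.cons (1:ℝ) (φ a) : Fin (d+1) → ℝ))) = ⊤) :
    (∀ π : A → ℝ, (∀ a, 0 ≤ π a) → (∑ a, π a = 1) → IsUnit (designCov φ π).det →
      ∃ a, (d : ℝ) ≤ gObj φ π a) ∧
    (∃ π : A → ℝ, (∀ a, 0 ≤ π a) ∧ (∑ a, π a = 1) ∧ IsUnit (designCov φ π).det ∧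
      (∀ a, gObj φ π a ≤ d) ∧ (∃ a, gObj φ π a = d)) := by
  classical
  refine ⟨fun π => exists_le_gObj φ π, ?_⟩
  -- The augmented space is nonzero, so the spanning family is nonempty.
  have hA : Nonempty A := by
    by_contra hne
    rw [not_nonempty_iff] at hne
    rw [Set.range_eq_empty, Submodule.span_empty] at hspan
    exact bot_ne_top hspan
  let u : A → ℝ := fun _ => (Fintype.card A : ℝ)⁻¹
  have hu : ∀ a, 0 < u a := fun a => by simp [u, Fintype.card_pos]
  have hu1 : u ∈ stdSimplex ℝ A := ⟨fun a => (hu a).le, by simp [u]⟩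
  obtain ⟨π, ⟨h0, h1⟩, hmax⟩ := (isCompact_stdSimplex ℝ A).exists_isMaxOn ⟨u, hu1⟩
    (continuous_det_designCov φ).abs.continuousOn
  have hpos : 0 < |(designCov φ π).det| :=
    (abs_pos.mpr (isUnit_det_designCov φ hspan u hu).ne_zero).trans_le (hmax hu1)
  have hdet : IsUnit (designCov φ π).det := isUnit_iff_ne_zero.mpr (abs_pos.mp hpos)
  have hle : ∀ a, gObj φ π a ≤ d := by
    refine fun a => le_of_forall_pow_mul_le_one d _ fun t ht0 ht1 => ?_
    have hmem : (fun b => (1 - t) * π b + t * (Pi.single a 1 : A → ℝ) b) ∈ stdSimplex ℝ A :=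
      convex_stdSimplex ℝ A ⟨h0, h1⟩ (single_mem_stdSimplex ℝ a) (sub_nonneg.mpr ht1) ht0
        (sub_add_cancel 1 t)
    have h := hmax hmem
    simp only [Set.mem_ofPred_eq, det_designCov_mix φ π h1 hdet, abs_mul _ (designCov φ π).det] at h
    exact (le_abs_self _).trans ((mul_le_iff_le_one_left hpos).mp h)
  obtain ⟨a, ha⟩ := exists_le_gObj φ π h0 h1 hdet
  exact ⟨π, h0, h1, hdet, hle, a, (hle a).antisymm ha⟩
end

section
/- Let X and A be finite sets and φ: X×A → ℝ^d a feature map. Suppose that for each x ∈ X there is a conditional design π^{cg}(·|x) ∈ Δ(A) such that, with V(x,π) = Σ_a π(a)·(φ(x,a) − φ(x,π))(φ(x,a) − φ(x,π))ᵀ and φ(x,π) = Σ_a π(a)·φ(x,a), the matrix V(x, π^{cg}(·|x)) is invertible and max_{a∈A} (φ(x,a) − φ(x,π^{cg}(·|x)))ᵀ V(x,π^{cg}(·|x))⁻¹ (φ(x,a) − φ(x,π^{cg}(·|x))) ≤ d. Define centered features φ^g(x,a) = φ(x,a) − φ(x, π^{cg}(·|x)). Suppose further that μ^g ∈ Δ(X×A)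 satisfies, with M(μ) = E_{(x,a)∼μ}[φ^g(x,a)·φ^g(x,a)ᵀ] invertible, sup_{x∈X, a∈A} φ^g(x,a)ᵀ M(μ^g)⁻¹ φ^g(x,a) = d. Define the preferential design π^g ∈ Δ(X×A) by π^g(x,a) = μ^g_X(x)·π^{cg}(a|x), where μ^g_X is the x-marginal of μ^g. Then V(π^g) := E_{x∼μ^g_X}[V(x, π^{cg}(·|x))] satisfies sup_{x∈X, a∈A} φ^g(x,a)ᵀ V(π^g)⁻¹ φ^g(x,a) ≤ d². -/
/-!
Each conditional design satisfies the Cauchy–Schwarz bound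
`(u ⬝ᵥ z)² ≤ (uᵀ S⁻¹ u) (zᵀ S z)` with `S = V(x, π^{cg})` and `u = φ^g(x,a)`; conditional
G-optimality turns it into `φ^g(x,a) φ^g(x,a)ᵀ ≼ d V(x, π^{cg})`. Averaging over `μ^g` gives
`M ≼ d V(π^g)` in the Loewner order, so `V(π^g)` is invertible. For `v = φ^g(x,a)`,
`y = V(π^g)⁻¹ v` and `q = vᵀ V(π^g)⁻¹ v = v ⬝ᵥ y = yᵀ V(π^g) y`, the same Cauchy–Schwarz
inequality for `M` reads `q² ≤ (vᵀ M⁻¹ v) (yᵀ M y) ≤ d · d q`, hence `q ≤ d²`.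
-/

open Finset Matrix

/-- Conditional mean feature φ(x,π) = Σ_a π(a)·φ(x,a). -/
noncomputable def condFeatMean {X A : Type*} [Fintype A] {d : ℕ}
    (φ : X → A → Fin d → ℝ) (π : X → A → ℝ) (x : X) (i : Fin d) : ℝ :=
  ∑ a, π x a * φ x a i

/-- Conditional covariance V(x,π) = Σ_a π(a)·(φ(x,a)−φ(x,π))(φ(x,a)−φ(x,π))ᵀ. -/
noncomputable def condCov {X A : Type*} [Fintype A] {d : ℕ}
    (φ : X → A → Fin d → ℝ) (π : X → A → ℝ) (x : X) : Matrix (Fin d) (Fin d) ℝ :=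
  Matrix.of fun i j => ∑ a, π x a *
    ((φ x a i - condFeatMean φ π x i) * (φ x a j - condFeatMean φ π x j))

/-- The matrix `∑ k, w k • (u k)(u k)ᵀ` of weighted second moments, as a quadratic form. -/
lemma quadForm_secondMoment {ι : Type*} [Fintype ι] {d : ℕ} (w : ι → ℝ)
    (u : ι → Fin d → ℝ) (z : Fin d → ℝ) :
    z ⬝ᵥ (Matrix.of fun i j => ∑ k, w k * (u k i * u k j)).mulVec z
      = ∑ k, w k * (u k ⬝ᵥ z) ^ 2 := by
  simp only [dotProduct, mulVec, Matrix.of_apply, sq, Finset.sum_mul, Finset.mul_sum]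
  rw [Finset.sum_comm_cycle]
  refine Finset.sum_congr rfl fun k _ => ?_
  rw [Finset.sum_comm]
  refine Finset.sum_congr rfl fun i _ => Finset.sum_congr rfl fun j _ => ?_
  ring

/-- Cauchy–Schwarz for the form of an invertible symmetric positive semidefinite `S`, applied
to `S⁻¹ u` and `z`. -/
lemma sq_dotProduct_le_inv_mul {d : ℕ} {S : Matrix (Fin d) (Fin d) ℝ} (hT : Sᵀ = S)
    (h0 : ∀ z, 0 ≤ z ⬝ᵥ S.mulVec z) (hS : IsUnit S.det) (u z : Fin d → ℝ) :
    (u ⬝ᵥ z) ^ 2 ≤ (u ⬝ᵥ S⁻¹.mulVec u) * (z ⬝ᵥ S.mulVec z) := by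
  set w := S⁻¹.mulVec u with hw
  have hSw : S.mulVec w = u := by
    rw [hw, mulVec_mulVec, mul_nonsing_inv _ hS, one_mulVec]
  have hwz : w ⬝ᵥ S.mulVec z = u ⬝ᵥ z := by
    rw [dotProduct_mulVec, ← mulVec_transpose, hT, hSw]
  -- The form is nonnegative along the line `z + t w`, so its discriminant in `t` is nonpositive.
  have key : ∀ t : ℝ, 0 ≤ (u ⬝ᵥ w) * (t * t) + (2 * (u ⬝ᵥ z)) * t + z ⬝ᵥ S.mulVec z := by
    intro t
    have h := h0 (z + t • w)
    have e : (z + t • w) ⬝ᵥ S.mulVec (z + t • w)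
        = (u ⬝ᵥ w) * (t * t) + (2 * (u ⬝ᵥ z)) * t + z ⬝ᵥ S.mulVec z := by
      simp only [mulVec_add, mulVec_smul, hSw, add_dotProduct, dotProduct_add, smul_dotProduct,
        dotProduct_smul, hwz, smul_eq_mul, dotProduct_comm z u, dotProduct_comm w u]
      ring
    rwa [e] at h
  have := discrim_le_zero key
  rw [discrim] at this
  linarith

/-- Preferential G-optimal design guarantee: given per-prompt centered conditional
G-optimal designs π^{cg}(·|x) (value ≤ d), centered features φ^g, and a global
G-optimal design μ^g for φ^g (sup of the M(μ^g)⁻¹-quadratic form equal to d), the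
preferential design π^g(x,a) = μ^g_X(x)·π^{cg}(a|x) satisfies
sup_{x,a} φ^g(x,a)ᵀ V(π^g)⁻¹ φ^g(x,a) ≤ d², where V(π^g) = E_{x∼μ^g_X}[V(x,π^{cg}(·|x))]. -/
theorem preferential_design {X A : Type*} [Fintype X] [Fintype A] (d : ℕ)
    (φ : X → A → Fin d → ℝ)
    (πcg : X → A → ℝ) (hcg0 : ∀ x a, 0 ≤ πcg x a) (hcg1 : ∀ x, ∑ a, πcg x a = 1)
    (hcgInv : ∀ x, IsUnit (condCov φ πcg x).det)
    (hcgOpt : ∀ x a,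
      (fun i => φ x a i - condFeatMean φ πcg x i) ⬝ᵥ
        ((condCov φ πcg x)⁻¹).mulVec (fun i => φ x a i - condFeatMean φ πcg x i) ≤ d)
    (φg : X → A → Fin d → ℝ)
    (hφg : ∀ x a i, φg x a i = φ x a i - condFeatMean φ πcg x i)
    (μg : X → A → ℝ) (hμ0 : ∀ x a, 0 ≤ μg x a) (hμ1 : ∑ x, ∑ a, μg x a = 1)
    (M : Matrix (Fin d) (Fin d) ℝ)
    (hM : M = Matrix.of fun i j => ∑ x, ∑ a, μg x a * (φg x a i * φg x a j))
    (hMInv : IsUnit M.det)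
    (hMOpt : (∀ x a, φg x a ⬝ᵥ M⁻¹.mulVec (φg x a) ≤ d) ∧
      (∃ x a, φg x a ⬝ᵥ M⁻¹.mulVec (φg x a) = d))
    (Vg : Matrix (Fin d) (Fin d) ℝ)
    (hVg : Vg = ∑ x, (∑ a, μg x a) • condCov φ πcg x) :
    ∀ x a, φg x a ⬝ᵥ (Vg⁻¹).mulVec (φg x a) ≤ (d : ℝ)^2 := by
  classical
  have hφ : ∀ x a, (fun i => φ x a i - condFeatMean φ πcg x i) = φg x a := fun x a =>
    funext fun i => (hφg x a i).symm
  have hC : ∀ x, condCov φ πcg x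
      = Matrix.of fun i j => ∑ a, πcg x a * (φg x a i * φg x a j) := by
    intro x; ext i j; simp [condCov, hφg]
  have hCq : ∀ x z, 0 ≤ z ⬝ᵥ (condCov φ πcg x).mulVec z := by
    intro x z
    rw [hC, quadForm_secondMoment]
    exact Finset.sum_nonneg fun a _ => mul_nonneg (hcg0 x a) (sq_nonneg _)
  have hCT : ∀ x, (condCov φ πcg x)ᵀ = condCov φ πcg x := by
    intro x; rw [hC]; ext i j; simp [mul_comm (φg x _ i)]
  have hrank1 : ∀ x a z, (φg x a ⬝ᵥ z) ^ 2 ≤ d * (z ⬝ᵥ (condCov φ πcg x).mulVec z) := by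
    intro x a z
    have h := hcgOpt x a
    rw [hφ] at h
    exact (sq_dotProduct_le_inv_mul (hCT x) (hCq x) (hcgInv x) _ z).trans
      (mul_le_mul_of_nonneg_right h (hCq x z))
  have hMq : ∀ z, z ⬝ᵥ M.mulVec z = ∑ x, ∑ a, μg x a * (φg x a ⬝ᵥ z) ^ 2 := by
    intro z
    have h := quadForm_secondMoment (fun p : X × A => μg p.1 p.2) (fun p => φg p.1 p.2) z
    simp only [Fintype.sum_prod_type] at h
    rw [hM, h]
  have hM0 : ∀ z, 0 ≤ z ⬝ᵥ M.mulVec z := by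
    intro z
    rw [hMq]
    exact Finset.sum_nonneg fun x _ => Finset.sum_nonneg fun a _ =>
      mul_nonneg (hμ0 x a) (sq_nonneg _)
  have hMT : Mᵀ = M := by
    rw [hM]; ext i j; simp [mul_comm (φg _ _ i)]
  have hVq : ∀ z, z ⬝ᵥ Vg.mulVec z
      = ∑ x, (∑ a, μg x a) * (z ⬝ᵥ (condCov φ πcg x).mulVec z) := by
    intro z
    rw [hVg, sum_mulVec, dotProduct_sum]
    simp only [smul_mulVec, dotProduct_smul, smul_eq_mul]
  have hV0 : ∀ z, 0 ≤ z ⬝ᵥ Vg.mulVec z := by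
    intro z
    rw [hVq]
    exact Finset.sum_nonneg fun x _ =>
      mul_nonneg (Finset.sum_nonneg fun a _ => hμ0 x a) (hCq x z)
  have hMV : ∀ z, z ⬝ᵥ M.mulVec z ≤ d * (z ⬝ᵥ Vg.mulVec z) := by
    intro z
    rw [hMq, hVq, Finset.mul_sum]
    refine Finset.sum_le_sum fun x _ => ?_
    rw [Finset.sum_mul, Finset.mul_sum]
    refine Finset.sum_le_sum fun a _ => ?_
    calc μg x a * (φg x a ⬝ᵥ z) ^ 2
        ≤ μg x a * (d * (z ⬝ᵥ (condCov φ πcg x).mulVec z)) :=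
          mul_le_mul_of_nonneg_left (hrank1 x a z) (hμ0 x a)
      _ = d * (μg x a * (z ⬝ᵥ (condCov φ πcg x).mulVec z)) := by ring
  have hVInv : IsUnit Vg.det := by
    rw [isUnit_iff_ne_zero]
    intro hdet
    obtain ⟨z, hz, hVz⟩ := Matrix.exists_mulVec_eq_zero_iff.mpr hdet
    have h1 := hMV z
    rw [hVz, dotProduct_zero, mul_zero] at h1
    have h2 := sq_dotProduct_le_inv_mul hMT hM0 hMInv z z
    rw [le_antisymm h1 (hM0 z), mul_zero] at h2
    exact hz (dotProduct_self_eq_zero.mp (pow_eq_zero_iff two_ne_zero |>.mp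
      (le_antisymm h2 (sq_nonneg _))))
  intro x a
  set v := φg x a with hv
  set y := Vg⁻¹.mulVec v with hy
  have hVy : Vg.mulVec y = v := by
    rw [hy, mulVec_mulVec, mul_nonsing_inv _ hVInv, one_mulVec]
  have hyq : y ⬝ᵥ Vg.mulVec y = v ⬝ᵥ y := by rw [hVy, dotProduct_comm]
  have hq : 0 ≤ v ⬝ᵥ y := hyq ▸ hV0 y
  have hMy : y ⬝ᵥ M.mulVec y ≤ d * (v ⬝ᵥ y) := hyq ▸ hMV y
  have hd : (0 : ℝ) ≤ d := Nat.cast_nonneg d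
  have hmain : (v ⬝ᵥ y) ^ 2 ≤ d * (d * (v ⬝ᵥ y)) :=
    (sq_dotProduct_le_inv_mul hMT hM0 hMInv v y).trans
      (mul_le_mul (hMOpt.1 x a) hMy (hM0 y) hd)
  rcases hq.eq_or_lt with h | h
  · rw [← h]; positivity
  · refine le_of_mul_le_mul_right ?_ h
    linarith
end
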